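/- arXiv:2010.01529 — 6 statements merged into one kernel-verified Lean document; each statement's English description precedes it below -/
import Mathlib

section
/- Let ψ ∈ C²_b(ℝ³) (bounded with bounded continuous derivatives up to order two). Then for all v, v_* ∈ ℝ³ with v ≠ v_* and all ω ∈ S², |Δψ(v', v'_*, v, v_*)| ≤ C*_ψ(v, v_*) · |v − v_*|² · |sin θ cos θ|, where θ = arccos(n·ω) with n = (v − v_*)/|v − v_*|. -/
/-!
Put `a = ⟪v - w, ω⟫ ω` and `b = v - w - a`. These vectors are orthogonal, so the four velocities are
the vertices `w`, `w + a`, `w + b`, `w + a + b = v` of a rectangle, and two applications of the mean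
value theorem give `-Δψ = D²ψ(u)(a, b)` for some `u` in this rectangle. By Thales, `u` sees the
diagonal from `v` to `w` under an obtuse angle, which forces `‖u‖² ≤ ‖v‖² + ‖w‖²`. As `a ⟂ b`,
subtracting `c I` from `D²ψ(u)` changes nothing, so Cauchy–Schwarz bounds `|Δψ|` by
`|D²ψ(u) - c I| ‖a‖ ‖b‖` for every `c`. The choices `c = 0` and `c = Tr(D²ψ(0)) / 3` give the two
entries of the minimum, and `‖a‖ ‖b‖ = ‖v - w‖² |sin θ cos θ|`.
-/

open MeasureTheory Real Filter
open scoped RealInnerProductSpace Topology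

noncomputable section

abbrev E3 := EuclideanSpace ℝ (Fin 3)

/-- The Hessian of `ψ` at `u` as a `3 × 3` matrix. -/
noncomputable def hessMat (ψ : E3 → ℝ) (u : E3) : Matrix (Fin 3) (Fin 3) ℝ :=
  Matrix.of fun i j =>
    iteratedFDeriv ℝ 2 ψ u ![EuclideanSpace.single i (1 : ℝ), EuclideanSpace.single j (1 : ℝ)]

/-- Frobenius norm of a `3 × 3` real matrix. -/
noncomputable def frobNorm (A : Matrix (Fin 3) (Fin 3) ℝ) : ℝ :=
  Real.sqrt (∑ i, ∑ j, (A i j) ^ 2)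

/-- `‖D²ψ‖_∞ = sup_u |D²ψ(u)|`. -/
noncomputable def hessSupNorm (ψ : E3 → ℝ) : ℝ :=
  ⨆ u : E3, frobNorm (hessMat ψ u)

/-- `‖D²ψ‖_* = sup_{v,v_*} (1+|v|²+|v_*|²)^{-1/4} sup_{|u| ≤ √(|v|²+|v_*|²)}
      |D²ψ(u) - (1/3) Tr(D²ψ(0)) I|`. -/
noncomputable def hessStarNorm (ψ : E3 → ℝ) : ℝ :=
  ⨆ p : E3 × E3,
    (1 + ‖p.1‖ ^ 2 + ‖p.2‖ ^ 2) ^ (-(1 / 4 : ℝ)) *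
      ⨆ u : {u : E3 // ‖u‖ ≤ Real.sqrt (‖p.1‖ ^ 2 + ‖p.2‖ ^ 2)},
        frobNorm (hessMat ψ u -
          ((1 / 3) * Matrix.trace (hessMat ψ 0)) • (1 : Matrix (Fin 3) (Fin 3) ℝ))

/-- `C*_ψ(v,v_*) = min{‖D²ψ‖_∞, ‖D²ψ‖_* (1+|v|²+|v_*|²)^{1/4}}`. -/
noncomputable def Cstar (ψ : E3 → ℝ) (v w : E3) : ℝ :=
  min (hessSupNorm ψ) (hessStarNorm ψ * (1 + ‖v‖ ^ 2 + ‖w‖ ^ 2) ^ ((1 / 4 : ℝ)))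

section MixedDifference

variable {E : Type*} [NormedAddCommGroup E] [NormedSpace ℝ E]

lemma exists_mixed_difference_eq_iteratedFDeriv {ψ : E → ℝ} (hψ : ContDiff ℝ 2 ψ) (w a b : E) :
    ∃ s ∈ Set.Icc (0 : ℝ) 1, ∃ t ∈ Set.Icc (0 : ℝ) 1,
      ψ (w + b + a) - ψ (w + b) - (ψ (w + a) - ψ w) =
        iteratedFDeriv ℝ 2 ψ (w + s • b + t • a) ![a, b] := by
  have hψ' : Differentiable ℝ ψ := hψ.differentiable two_ne_zero
  have hψ'' : Differentiable ℝ (fderiv ℝ ψ) :=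
    (hψ.fderiv_right one_add_one_eq_two.le).differentiable one_ne_zero
  have hasFDerivAt_increment (x : E) :
      HasFDerivAt (fun x => ψ (x + a) - ψ x) (fderiv ℝ ψ (x + a) - fderiv ℝ ψ x) x :=
    ((hasFDerivAt_comp_add_right a).2 (hψ' (x + a)).hasFDerivAt).sub (hψ' x).hasFDerivAt
  have hasFDerivAt_slope (x : E) :
      HasFDerivAt (fun x => fderiv ℝ ψ x b) ((fderiv ℝ (fderiv ℝ ψ) x).flip b) x :=
    by simpa using (hψ'' x).hasFDerivAt.clm_apply (hasFDerivAt_const b x)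
  obtain ⟨x, hx, hb⟩ := domain_mvt (fun x _ => (hasFDerivAt_increment x).hasFDerivWithinAt)
    convex_univ (Set.mem_univ w) (Set.mem_univ (w + b))
  obtain ⟨y, hy, ha⟩ := domain_mvt (fun x _ => (hasFDerivAt_slope x).hasFDerivWithinAt)
    convex_univ (Set.mem_univ x) (Set.mem_univ (x + a))
  rw [segment_eq_image', add_sub_cancel_left] at hx hy
  obtain ⟨s, hs, rfl⟩ := hx
  obtain ⟨t, ht, rfl⟩ := hy
  refine ⟨s, hs, t, ht, ?_⟩
  simp only [add_sub_cancel_left, sub_apply, ContinuousLinearMap.flip_apply] at ha hb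
  rw [iteratedFDeriv_two_apply]
  exact hb.trans ha

end MixedDifference

section Rectangle

variable {V : Type*} [NormedAddCommGroup V] [InnerProductSpace ℝ V]

lemma norm_sq_le_add_norm_sq_of_inner_sub_sub_nonpos {u v w : V} (h : ⟪u - v, u - w⟫ ≤ 0) :
    ‖u‖ ^ 2 ≤ ‖v‖ ^ 2 + ‖w‖ ^ 2 := by
  have hsq : ‖u - (v + w)‖ ^ 2 = 2 * ⟪u - v, u - w⟫ + ‖v‖ ^ 2 + ‖w‖ ^ 2 - ‖u‖ ^ 2 := by
    simp only [norm_sub_sq_real, norm_add_sq_real, inner_sub_left, inner_sub_right,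
      inner_add_right, real_inner_self_eq_norm_sq, real_inner_comm u v]
    ring
  linarith [sq_nonneg ‖u - (v + w)‖]

lemma norm_sq_le_of_mem_rectangle (w : V) {a b : V} (hab : ⟪a, b⟫ = 0) {s t : ℝ}
    (hs : s ∈ Set.Icc (0 : ℝ) 1) (ht : t ∈ Set.Icc (0 : ℝ) 1) :
    ‖w + s • b + t • a‖ ^ 2 ≤ ‖w + b + a‖ ^ 2 + ‖w‖ ^ 2 := by
  apply norm_sq_le_add_norm_sq_of_inner_sub_sub_nonpos
  have hdiag : ⟪w + s • b + t • a - (w + b + a), w + s • b + t • a - w⟫ =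
      -(s * (1 - s) * ‖b‖ ^ 2 + t * (1 - t) * ‖a‖ ^ 2) := by
    rw [show w + s • b + t • a - (w + b + a) = (s - 1) • b + (t - 1) • a by module,
      show w + s • b + t • a - w = s • b + t • a by module]
    simp only [inner_add_left, inner_add_right, real_inner_smul_left, real_inner_smul_right,
      real_inner_self_eq_norm_sq, hab, real_inner_comm a b]
    ring
  have hs' : 0 ≤ s * (1 - s) := mul_nonneg hs.1 (sub_nonneg.2 hs.2)
  have ht' : 0 ≤ t * (1 - t) := mul_nonneg ht.1 (sub_nonneg.2 ht.2)
  rw [hdiag, neg_nonpos]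
  positivity

lemma exists_collision_difference_eq_neg_iteratedFDeriv {ψ : V → ℝ} (hψ : ContDiff ℝ 2 ψ)
    {v w a : V} (ha : ⟪a, v - w - a⟫ = 0) :
    ∃ u, ‖u‖ ^ 2 ≤ ‖v‖ ^ 2 + ‖w‖ ^ 2 ∧
      ψ (v - a) + ψ (w + a) - ψ v - ψ w = -iteratedFDeriv ℝ 2 ψ u ![a, v - w - a] := by
  obtain ⟨s, hs, t, ht, hst⟩ := exists_mixed_difference_eq_iteratedFDeriv hψ w a (v - w - a)
  have hu := norm_sq_le_of_mem_rectangle w ha hs ht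
  have hva : w + (v - w - a) = v - a := by abel
  rw [hva, sub_add_cancel] at hst hu
  exact ⟨_, hu, by rw [← hst]; ring⟩

end Rectangle

section UnitVector

variable {V : Type*} [NormedAddCommGroup V] [InnerProductSpace ℝ V] {ω : V}

lemma inner_inner_smul_sub_eq_zero (hω : ‖ω‖ = 1) (x : V) :
    ⟪⟪x, ω⟫ • ω, x - ⟪x, ω⟫ • ω⟫ = 0 := by
  rw [inner_sub_right, real_inner_smul_left, real_inner_smul_left, real_inner_smul_right,
    real_inner_self_eq_norm_sq, hω, real_inner_comm, one_pow, mul_one, sub_self]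

lemma arccos_inner_inv_norm_smul (hω : ‖ω‖ = 1) (x : V) :
    arccos ⟪‖x‖⁻¹ • x, ω⟫ = InnerProductGeometry.angle x ω := by
  rw [InnerProductGeometry.angle, real_inner_smul_left, hω, mul_one, inv_mul_eq_div]

lemma inner_eq_norm_mul_cos_angle (hω : ‖ω‖ = 1) (x : V) :
    ⟪x, ω⟫ = ‖x‖ * cos (InnerProductGeometry.angle x ω) := by
  rw [← InnerProductGeometry.cos_angle_mul_norm_mul_norm, hω, mul_one, mul_comm]

lemma norm_sub_inner_smul (hω : ‖ω‖ = 1) (x : V) :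
    ‖x - ⟪x, ω⟫ • ω‖ = ‖x‖ * sin (InnerProductGeometry.angle x ω) := by
  rw [← sq_eq_sq₀ (norm_nonneg _)
    (mul_nonneg (norm_nonneg _) (InnerProductGeometry.sin_angle_nonneg _ _)), mul_pow, sin_sq,
    norm_sub_sq_real, real_inner_smul_right, norm_smul, hω, mul_one, norm_eq_abs, sq_abs,
    inner_eq_norm_mul_cos_angle hω]
  ring

lemma norm_inner_smul_mul_norm_sub (hω : ‖ω‖ = 1) (x : V) :
    ‖⟪x, ω⟫ • ω‖ * ‖x - ⟪x, ω⟫ • ω‖ = ‖x‖ ^ 2 *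
      |sin (InnerProductGeometry.angle x ω) * cos (InnerProductGeometry.angle x ω)| := by
  rw [norm_sub_inner_smul hω, norm_smul, hω, mul_one, inner_eq_norm_mul_cos_angle hω,
    norm_eq_abs, abs_mul, abs_norm, abs_mul,
    abs_of_nonneg (InnerProductGeometry.sin_angle_nonneg _ _)]
  ring

end UnitVector

section Frobenius

open scoped Matrix Matrix.Norms.Frobenius

variable {m n : Type*} [Fintype m] [Fintype n]

lemma norm_toLp_mulVec_le_frobenius {𝕜 : Type*} [RCLike 𝕜] (A : Matrix m n 𝕜)
    (y : EuclideanSpace 𝕜 n) : ‖WithLp.toLp 2 (A *ᵥ y)‖ ≤ ‖A‖ * ‖y‖ := by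
  rw [← Matrix.frobenius_norm_replicateCol (ι := Unit), Matrix.replicateCol_mulVec]
  exact (Matrix.frobenius_norm_mul A _).trans_eq (by rw [Matrix.frobenius_norm_replicateCol])

lemma abs_dotProduct_mulVec_le_frobenius (A : Matrix m n ℝ) (x : EuclideanSpace ℝ m)
    (y : EuclideanSpace ℝ n) : |x ⬝ᵥ A *ᵥ y| ≤ ‖A‖ * (‖x‖ * ‖y‖) :=
  calc |x ⬝ᵥ A *ᵥ y| = |⟪WithLp.toLp 2 (A *ᵥ y), x⟫| := by
        rw [EuclideanSpace.inner_eq_star_dotProduct, star_trivial]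
    _ ≤ ‖WithLp.toLp 2 (A *ᵥ y)‖ * ‖x‖ := abs_real_inner_le_norm _ _
    _ ≤ ‖A‖ * ‖y‖ * ‖x‖ := by gcongr; exact norm_toLp_mulVec_le_frobenius A y
    _ = ‖A‖ * (‖x‖ * ‖y‖) := by ring

lemma abs_dotProduct_mulVec_le_of_inner_eq_zero [DecidableEq n] (A : Matrix n n ℝ)
    {x y : EuclideanSpace ℝ n} (hxy : ⟪x, y⟫ = 0) (c : ℝ) :
    |x ⬝ᵥ A *ᵥ y| ≤ ‖A - c • (1 : Matrix n n ℝ)‖ * (‖x‖ * ‖y‖) := by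
  have hdot : x ⬝ᵥ y = 0 := by
    rwa [real_inner_comm, EuclideanSpace.inner_eq_star_dotProduct, star_trivial] at hxy
  have hsub : x ⬝ᵥ (A - c • (1 : Matrix n n ℝ)) *ᵥ y = x ⬝ᵥ A *ᵥ y := by
    rw [Matrix.sub_mulVec, Matrix.smul_mulVec, Matrix.one_mulVec, dotProduct_sub,
      dotProduct_smul, hdot, smul_zero, sub_zero]
  exact hsub ▸ abs_dotProduct_mulVec_le_frobenius _ x y

lemma frobNorm_eq_norm (A : Matrix (Fin 3) (Fin 3) ℝ) : frobNorm A = ‖A‖ := by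
  simp [frobNorm, Matrix.frobenius_norm_def, sqrt_eq_rpow]

lemma frobNorm_nonneg (A : Matrix (Fin 3) (Fin 3) ℝ) : 0 ≤ frobNorm A := sqrt_nonneg _

end Frobenius

section Hessian

open scoped Matrix Matrix.Norms.Frobenius

variable {ψ : E3 → ℝ}

lemma iteratedFDeriv_two_eq_dotProduct_hessMat (ψ : E3 → ℝ) (u a b : E3) :
    iteratedFDeriv ℝ 2 ψ u ![a, b] = a ⬝ᵥ hessMat ψ u *ᵥ b := by
  have hhess : hessMat ψ u = LinearMap.toMatrix₂ (EuclideanSpace.basisFun (Fin 3) ℝ).toBasis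
      (EuclideanSpace.basisFun (Fin 3) ℝ).toBasis (bilinearIteratedFDerivTwo ℝ ψ u) := by
    ext i j
    simp [hessMat, LinearMap.toMatrix₂_apply, bilinearIteratedFDerivTwo_eq_iteratedFDeriv]
  rw [hhess, ← bilinearIteratedFDerivTwo_eq_iteratedFDeriv]
  exact LinearMap.BilinForm.apply_eq_dotProduct_toMatrix_mulVec
    (EuclideanSpace.basisFun (Fin 3) ℝ).toBasis _ a b

lemma abs_iteratedFDeriv_two_le_of_inner_eq_zero (ψ : E3 → ℝ) (u : E3) {a b : E3}
    (hab : ⟪a, b⟫ = 0) (c : ℝ) :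
    |iteratedFDeriv ℝ 2 ψ u ![a, b]| ≤
      frobNorm (hessMat ψ u - c • (1 : Matrix (Fin 3) (Fin 3) ℝ)) * (‖a‖ * ‖b‖) := by
  rw [iteratedFDeriv_two_eq_dotProduct_hessMat, frobNorm_eq_norm]
  exact abs_dotProduct_mulVec_le_of_inner_eq_zero _ hab c

lemma abs_hessMat_apply_le (ψ : E3 → ℝ) (u : E3) (i j : Fin 3) :
    |hessMat ψ u i j| ≤ ‖iteratedFDeriv ℝ 2 ψ u‖ := by
  simpa [hessMat, Fin.prod_univ_two] using (iteratedFDeriv ℝ 2 ψ u).le_opNorm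
    ![EuclideanSpace.single i (1 : ℝ), EuclideanSpace.single j (1 : ℝ)]

lemma frobNorm_hessMat_le (ψ : E3 → ℝ) (u : E3) :
    frobNorm (hessMat ψ u) ≤ 3 * ‖iteratedFDeriv ℝ 2 ψ u‖ := by
  refine sqrt_le_iff.2 ⟨by positivity, ?_⟩
  calc ∑ i, ∑ j, hessMat ψ u i j ^ 2
      ≤ ∑ _i : Fin 3, ∑ _j : Fin 3, ‖iteratedFDeriv ℝ 2 ψ u‖ ^ 2 := by
        gcongr ∑ i, ∑ j, ?_ with i _ j
        exact sq_le_sq.2 ((abs_hessMat_apply_le ψ u i j).trans_eq (abs_norm _).symm)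
    _ = (3 * ‖iteratedFDeriv ℝ 2 ψ u‖) ^ 2 := by
        simp only [Finset.sum_const, Finset.card_univ, Fintype.card_fin, nsmul_eq_mul]
        ring

lemma bddAbove_range_frobNorm_hessMat_sub (hD : ∃ C : ℝ, ∀ u, ‖iteratedFDeriv ℝ 2 ψ u‖ ≤ C)
    (A : Matrix (Fin 3) (Fin 3) ℝ) :
    BddAbove (Set.range fun u => frobNorm (hessMat ψ u - A)) := by
  obtain ⟨C, hC⟩ := hD
  refine ⟨3 * C + ‖A‖, Set.forall_mem_range.2 fun u => ?_⟩
  calc frobNorm (hessMat ψ u - A) ≤ frobNorm (hessMat ψ u) + ‖A‖ := by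
        simpa only [frobNorm_eq_norm] using norm_sub_le (hessMat ψ u) A
    _ ≤ 3 * C + ‖A‖ := by gcongr; exact (frobNorm_hessMat_le ψ u).trans (by gcongr; exact hC u)

end Hessian

lemma mul_le_ciSup_mul_ciSup {ι κ : Type*} {S : ι → Set κ} {ρ : ι → ℝ} {F : κ → ℝ}
    (hρ₀ : ∀ i, 0 ≤ ρ i) (hρ : BddAbove (Set.range ρ)) (hF₀ : ∀ x, 0 ≤ F x)
    (hF : BddAbove (Set.range F)) (i : ι) {x : κ} (hx : x ∈ S i) :
    ρ i * F x ≤ ⨆ i, ρ i * ⨆ y : S i, F y := by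
  have hinner (i : ι) : BddAbove (Set.range fun y : S i => F y) :=
    hF.mono (Set.range_comp_subset_range _ F)
  have houter : BddAbove (Set.range fun i => ρ i * ⨆ y : S i, F y) := by
    obtain ⟨R, hR⟩ := hρ
    obtain ⟨K, hK⟩ := hF
    have hK₀ : 0 ≤ K := (hF₀ x).trans (hK ⟨x, rfl⟩)
    refine ⟨R * K, Set.forall_mem_range.2 fun i => ?_⟩
    exact mul_le_mul (hR ⟨i, rfl⟩) (Real.iSup_le (fun y => hK ⟨y, rfl⟩) hK₀)
      (Real.iSup_nonneg fun y => hF₀ y) ((hρ₀ i).trans (hR ⟨i, rfl⟩))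
  exact (mul_le_mul_of_nonneg_left (le_ciSup (hinner i) ⟨x, hx⟩) (hρ₀ i)).trans
    (le_ciSup houter i)

section Cstar

variable {ψ : E3 → ℝ}

lemma frobNorm_hessMat_le_hessSupNorm (hD : ∃ C : ℝ, ∀ u, ‖iteratedFDeriv ℝ 2 ψ u‖ ≤ C)
    (u : E3) : frobNorm (hessMat ψ u) ≤ hessSupNorm ψ :=
  le_ciSup (by simpa only [sub_zero] using bddAbove_range_frobNorm_hessMat_sub hD 0) u

lemma frobNorm_hessMat_sub_le_hessStarNorm
    (hD : ∃ C : ℝ, ∀ u, ‖iteratedFDeriv ℝ 2 ψ u‖ ≤ C) {u v w : E3}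
    (hu : ‖u‖ ≤ √(‖v‖ ^ 2 + ‖w‖ ^ 2)) :
    frobNorm (hessMat ψ u -
        ((1 / 3) * Matrix.trace (hessMat ψ 0)) • (1 : Matrix (Fin 3) (Fin 3) ℝ)) ≤
      hessStarNorm ψ * (1 + ‖v‖ ^ 2 + ‖w‖ ^ 2) ^ (1 / 4 : ℝ) := by
  have hweight : BddAbove (Set.range fun p : E3 × E3 =>
      (1 + ‖p.1‖ ^ 2 + ‖p.2‖ ^ 2) ^ (-(1 / 4 : ℝ))) :=
    ⟨1, Set.forall_mem_range.2 fun p => rpow_le_one_of_one_le_of_nonpos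
      (by linarith [sq_nonneg ‖p.1‖, sq_nonneg ‖p.2‖]) (by norm_num)⟩
  have hstar := mul_le_ciSup_mul_ciSup
    (S := fun p : E3 × E3 => {u : E3 | ‖u‖ ≤ √(‖p.1‖ ^ 2 + ‖p.2‖ ^ 2)})
    (fun p => by positivity) hweight (fun _ => frobNorm_nonneg _)
    (bddAbove_range_frobNorm_hessMat_sub hD
      (((1 / 3) * Matrix.trace (hessMat ψ 0)) • (1 : Matrix (Fin 3) (Fin 3) ℝ))) (v, w) hu
  rwa [rpow_neg (by positivity), inv_mul_le_iff₀' (by positivity)] at hstar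

lemma abs_iteratedFDeriv_two_le_Cstar (hD : ∃ C : ℝ, ∀ u, ‖iteratedFDeriv ℝ 2 ψ u‖ ≤ C)
    {u v w a b : E3} (hu : ‖u‖ ^ 2 ≤ ‖v‖ ^ 2 + ‖w‖ ^ 2) (hab : ⟪a, b⟫ = 0) :
    |iteratedFDeriv ℝ 2 ψ u ![a, b]| ≤ Cstar ψ v w * (‖a‖ * ‖b‖) := by
  rw [Cstar, min_mul_of_nonneg _ _ (by positivity)]
  refine le_min ?_ ?_
  · have hc := abs_iteratedFDeriv_two_le_of_inner_eq_zero ψ u hab 0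
    rw [zero_smul, sub_zero] at hc
    exact hc.trans (by gcongr; exact frobNorm_hessMat_le_hessSupNorm hD u)
  · exact (abs_iteratedFDeriv_two_le_of_inner_eq_zero ψ u hab _).trans
      (mul_le_mul_of_nonneg_right
        (frobNorm_hessMat_sub_le_hessStarNorm hD (le_sqrt_of_sq_le hu)) (by positivity))

end Cstar

theorem stmt0_general (ψ : E3 → ℝ) (hψ : ContDiff ℝ 2 ψ)
    (hD : ∃ C : ℝ, ∀ u : E3, ‖iteratedFDeriv ℝ 2 ψ u‖ ≤ C)
    (v w ω : E3) (hω : ‖ω‖ = 1) :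
    |ψ (v - ⟪v - w, ω⟫ • ω) + ψ (w + ⟪v - w, ω⟫ • ω) - ψ v - ψ w| ≤
      Cstar ψ v w * ‖v - w‖ ^ 2 *
        |Real.sin (Real.arccos ⟪‖v - w‖⁻¹ • (v - w), ω⟫) *
          Real.cos (Real.arccos ⟪‖v - w‖⁻¹ • (v - w), ω⟫)| := by
  have horth := inner_inner_smul_sub_eq_zero hω (v - w)
  obtain ⟨u, hu, hΔ⟩ := exists_collision_difference_eq_neg_iteratedFDeriv hψ horth
  rw [hΔ, abs_neg, mul_assoc, arccos_inner_inv_norm_smul hω, ← norm_inner_smul_mul_norm_sub hω]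
  exact abs_iteratedFDeriv_two_le_Cstar hD hu horth

/-- For `ψ ∈ C²_b(ℝ³)`, for all `v ≠ v_*` and all `ω ∈ S²`,
`|Δψ(v',v'_*,v,v_*)| ≤ C*_ψ(v,v_*) |v-v_*|² |sin θ cos θ|`
where `θ = arccos(n·ω)`, `n = (v-v_*)/|v-v_*|`, and
`v' = v - ((v-v_*)·ω)ω`, `v'_* = v_* + ((v-v_*)·ω)ω`. -/
theorem stmt0 (ψ : E3 → ℝ) (hψ : ContDiff ℝ 2 ψ)
    (hbd : ∀ i : ℕ, i ≤ 2 → ∃ C : ℝ, ∀ u : E3, ‖iteratedFDeriv ℝ i ψ u‖ ≤ C)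
    (v w : E3) (hvw : v ≠ w) (ω : E3) (hω : ‖ω‖ = 1) :
    |ψ (v - ⟪v - w, ω⟫ • ω) + ψ (w + ⟪v - w, ω⟫ • ω) - ψ v - ψ w| ≤
      Cstar ψ v w * ‖v - w‖ ^ 2 *
        |Real.sin (Real.arccos ⟪‖v - w‖⁻¹ • (v - w), ω⟫) *
          Real.cos (Real.arccos ⟪‖v - w‖⁻¹ • (v - w), ω⟫)| :=
  stmt0_general ψ hψ (hbd 2 le_rfl) v w ω hω

end
end

section
/- Let φ̂ : [0,∞) → ℝ be Borel measurable with ∫₀^∞ r³ φ̂(r)² dr = 1/(2π), and let α > 0. Define, for ε > 0, A*_φ̂(ε) := sup_{ρ ≥ 0} (min(ρ^{1/2},1)) ∫_{ρ/ε}^∞ r³ φ̂(r)² dr and A*_{φ̂,α}(ε) := sup_{ρ > 0} (min(ρ^{1/2},1)) ∫₀^{ρ/ε} (εr/ρ)^α r³ φ̂(r)² dr. Then 0 ≤ A*_φ̂(ε) ≤ 1/(2π) and 0 ≤ A*_{φ̂,α}(ε) ≤ 1/(2π) for all ε > 0, and lim_{ε→0⁺} A*_φ̂(ε) = 0 and lim_{ε→0⁺}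 A*_{φ̂,α}(ε) = 0. -/
/-!
Both suprema have the form `⨆ ρ, w ρ * H (ε / ρ)` with `w ρ = min (√ρ) 1` and
`H t = ∫₀^∞ k (t r) r³ φ̂(r)² dr`, where the kernel `k` is `1_{(1,∞)}(s)`, respectively
`s^α 1_{(0,1]}(s)`. Since `0 ≤ k ≤ 1`, `H` lies between `0` and the total mass; since `k s → 0` as
`s → 0`, dominated convergence gives `H t → 0` as `t → 0`. In `w ρ * H (ε / ρ)` both factors are
bounded, the first is small when `ρ` is small, and for all other `ρ` the ratio `ε / ρ`, hence the
second factor, is small. So the products tend to `0` uniformly in `ρ`, and so do their suprema.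
-/

open MeasureTheory Real Filter
open scoped Topology

noncomputable section

/-- `A*_φ̂(ε) = sup_{ρ ≥ 0} min(ρ^{1/2},1) ∫_{ρ/ε}^∞ r³ φ̂(r)² dr`. -/
noncomputable def Astar (φh : ℝ → ℝ) (ε : ℝ) : ℝ :=
  ⨆ ρ : {x : ℝ // 0 ≤ x},
    min (Real.sqrt ρ) 1 * ∫ r in Set.Ioi ((ρ : ℝ) / ε), r ^ 3 * (φh r) ^ 2

/-- `A*_{φ̂,α}(ε) = sup_{ρ > 0} min(ρ^{1/2},1) ∫₀^{ρ/ε} (εr/ρ)^α r³ φ̂(r)² dr`. -/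
noncomputable def AstarAlpha (φh : ℝ → ℝ) (α ε : ℝ) : ℝ :=
  ⨆ ρ : {x : ℝ // 0 < x},
    min (Real.sqrt ρ) 1 *
      ∫ r in Set.Ioc (0 : ℝ) ((ρ : ℝ) / ε), (ε * r / (ρ : ℝ)) ^ α * (r ^ 3 * (φh r) ^ 2)

section UniformLimits

lemma tendsto_iSup_zero_of_tendstoUniformly {β ι : Type*} {l : Filter β} {F : β → ι → ℝ}
    (hF : TendstoUniformly F 0 l) : Tendsto (fun b => ⨆ i, F b i) l (𝓝 0) := by
  rw [Metric.tendstoUniformly_iff] at hF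
  rw [Metric.tendsto_nhds]
  intro δ hδ
  filter_upwards [hF (δ / 2) (half_pos hδ)] with b hb
  have habs (i : ι) : |F b i| ≤ δ / 2 := by simpa [dist_eq_norm] using (hb i).le
  have hupper : ⨆ i, F b i ≤ δ / 2 :=
    Real.iSup_le (fun i => (abs_le.1 (habs i)).2) (half_pos hδ).le
  have hlower : -(δ / 2) ≤ ⨆ i, F b i := by
    rcases isEmpty_or_nonempty ι with _ | ⟨⟨i⟩⟩
    · simpa only [Real.iSup_of_isEmpty] using neg_nonpos.2 (half_pos hδ).le
    · exact (abs_le.1 (habs i)).1.trans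
        (le_ciSup ⟨δ / 2, Set.forall_mem_range.2 fun j => (abs_le.1 (habs j)).2⟩ i)
  rw [Real.dist_0_eq_abs]
  exact (abs_le.2 ⟨hlower, hupper⟩).trans_lt (half_lt_self hδ)

lemma tendstoUniformly_mul_comp_div {𝕜 R : Type*} [NormedField 𝕜] [NonUnitalSeminormedRing R]
    {w H : 𝕜 → R} {A B : ℝ} (hw : Tendsto w (𝓝 0) (𝓝 0)) (hwA : ∀ ρ, ‖w ρ‖ ≤ A)
    (hH : Tendsto H (𝓝 0) (𝓝 0)) (hHB : ∀ t, ‖H t‖ ≤ B) :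
    TendstoUniformly (fun ε ρ => w ρ * H (ε / ρ)) 0 (𝓝 0) := by
  rw [Metric.tendstoUniformly_iff]
  intro δ hδ
  have hwB : Tendsto (fun ρ => ‖w ρ‖ * B) (𝓝 0) (𝓝 0) := by
    simpa only [norm_zero, zero_mul] using hw.norm.mul_const B
  have hAH : Tendsto (fun t => A * ‖H t‖) (𝓝 0) (𝓝 0) := by
    simpa only [norm_zero, mul_zero] using hH.norm.const_mul A
  obtain ⟨η, hη, hsmall_w⟩ := Metric.eventually_nhds_iff.1 (hwB.eventually_lt_const hδ)
  obtain ⟨τ, hτ, hsmall_H⟩ := Metric.eventually_nhds_iff.1 (hAH.eventually_lt_const hδ)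
  filter_upwards [Metric.ball_mem_nhds (0 : 𝕜) (mul_pos hτ hη)] with ε hε ρ
  rw [mem_ball_zero_iff] at hε
  rw [Pi.zero_apply, dist_zero_left]
  refine (norm_mul_le _ _).trans_lt ?_
  rcases lt_or_ge ‖ρ‖ η with hρ | hρ
  · exact (mul_le_mul_of_nonneg_left (hHB _) (norm_nonneg _)).trans_lt
      (hsmall_w (by rwa [dist_zero_right]))
  · have hdiv : ‖ε / ρ‖ < τ := by
      rw [norm_div, div_lt_iff₀ (hη.trans_le hρ)]
      exact hε.trans_le (mul_le_mul_of_nonneg_left hρ hτ.le)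
    exact (mul_le_mul_of_nonneg_right (hwA ρ) (norm_nonneg _)).trans_lt
      (hsmall_H (by rwa [dist_zero_right]))

end UniformLimits

/-- The integral of `g` against the dilated kernel `r ↦ k (t r)`, as a function of the dilation
parameter `t`. -/
def dilationIntegral (μ : Measure ℝ) (k g : ℝ → ℝ) (t : ℝ) : ℝ :=
  ∫ r, k (t * r) * g r ∂μ

/-- The weighted supremum of dilation integrals at the relative scales `ε / ρ i`. The scales are an
indexed family so that `ρ ≥ 0` and `ρ > 0` are both covered; for `ρ i = 0` the dilation parameter
is `ε / 0 = 0`, which is harmless for weights with `w 0 = 0`. -/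
def dilationSup {ι : Type*} (ρ : ι → ℝ) (w : ℝ → ℝ) (μ : Measure ℝ) (k g : ℝ → ℝ) (ε : ℝ) : ℝ :=
  ⨆ i, w (ρ i) * dilationIntegral μ k g (ε / ρ i)

section Dilation

variable {μ : Measure ℝ} {w k g : ℝ → ℝ}

lemma dilationIntegral_nonneg (hk : ∀ s, 0 ≤ k s) (hg : 0 ≤ᵐ[μ] g) (t : ℝ) :
    0 ≤ dilationIntegral μ k g t :=
  integral_nonneg_of_ae (hg.mono fun _ hr => mul_nonneg (hk _) hr)

lemma dilationIntegral_le_integral (hk : ∀ s, k s ∈ Set.Icc 0 1) (hg : 0 ≤ᵐ[μ] g)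
    (hgi : Integrable g μ) (t : ℝ) : dilationIntegral μ k g t ≤ ∫ r, g r ∂μ :=
  integral_mono_of_nonneg (hg.mono fun _ hr => mul_nonneg (hk _).1 hr) hgi
    (hg.mono fun _ hr => mul_le_of_le_one_left hr (hk _).2)

lemma norm_dilationIntegral_le {C : ℝ} (hk : ∀ s, ‖k s‖ ≤ C) (hgi : Integrable g μ) (t : ℝ) :
    ‖dilationIntegral μ k g t‖ ≤ C * ∫ r, ‖g r‖ ∂μ := by
  rw [← integral_const_mul]
  exact norm_integral_le_of_norm_le (hgi.norm.const_mul C)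
    (.of_forall fun r => norm_mul_le_of_le (hk _) le_rfl)

lemma tendsto_dilationIntegral_zero {C : ℝ} (hkm : Measurable k) (hk : ∀ s, ‖k s‖ ≤ C)
    (hk0 : Tendsto k (𝓝 0) (𝓝 0)) (hgi : Integrable g μ) :
    Tendsto (dilationIntegral μ k g) (𝓝 0) (𝓝 0) := by
  have hpointwise (r : ℝ) : Tendsto (fun t => k (t * r) * g r) (𝓝 0) (𝓝 0) := by
    have hmul : Tendsto (fun t : ℝ => t * r) (𝓝 0) (𝓝 0) := by
      simpa only [zero_mul] using (continuous_mul_const r).tendsto 0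
    simpa only [zero_mul, Function.comp_apply] using (hk0.comp hmul).mul_const (g r)
  have hlim : Tendsto (dilationIntegral μ k g) (𝓝 0) (𝓝 (∫ _, (0 : ℝ) ∂μ)) :=
    tendsto_integral_filter_of_dominated_convergence (fun r => C * ‖g r‖)
      (.of_forall fun t =>
        (hkm.comp (measurable_const_mul t)).aestronglyMeasurable.mul hgi.aestronglyMeasurable)
      (.of_forall fun t => .of_forall fun r => norm_mul_le_of_le (hk _) le_rfl)
      (hgi.norm.const_mul C) (.of_forall hpointwise)
  simpa only [integral_zero] using hlim

variable {ι : Type*} (ρ : ι → ℝ)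

lemma dilationSup_nonneg (hw : ∀ x, 0 ≤ w x) (hk : ∀ s, 0 ≤ k s) (hg : 0 ≤ᵐ[μ] g) (ε : ℝ) :
    0 ≤ dilationSup ρ w μ k g ε :=
  Real.iSup_nonneg fun _ => mul_nonneg (hw _) (dilationIntegral_nonneg hk hg _)

lemma dilationSup_le_integral (hw : ∀ x, w x ≤ 1) (hk : ∀ s, k s ∈ Set.Icc 0 1)
    (hg : 0 ≤ᵐ[μ] g) (hgi : Integrable g μ) (ε : ℝ) :
    dilationSup ρ w μ k g ε ≤ ∫ r, g r ∂μ :=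
  Real.iSup_le
    (fun _ => (mul_le_of_le_one_left (dilationIntegral_nonneg (fun s => (hk s).1) hg _)
      (hw _)).trans (dilationIntegral_le_integral hk hg hgi _))
    (integral_nonneg_of_ae hg)

lemma tendsto_dilationSup_zero {A C : ℝ} (hw : ∀ x, ‖w x‖ ≤ A) (hw0 : Tendsto w (𝓝 0) (𝓝 0))
    (hkm : Measurable k) (hk : ∀ s, ‖k s‖ ≤ C) (hk0 : Tendsto k (𝓝 0) (𝓝 0))
    (hgi : Integrable g μ) : Tendsto (dilationSup ρ w μ k g) (𝓝 0) (𝓝 0) :=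
  tendsto_iSup_zero_of_tendstoUniformly <|
    (tendstoUniformly_mul_comp_div hw0 hw (tendsto_dilationIntegral_zero hkm hk hk0 hgi)
      (norm_dilationIntegral_le hk hgi)).comp ρ

end Dilation

section Kernels

/-- The kernel `1_{(1,∞)}`, whose dilation integrals are the tail integrals in `Astar`. -/
def tailKernel : ℝ → ℝ :=
  (Set.Ioi 1).indicator 1

/-- The kernel `s ↦ s^α 1_{(0,1]}(s)`, whose dilation integrals are the integrals in
`AstarAlpha`. -/
def headKernel (α : ℝ) : ℝ → ℝ :=
  (Set.Ioc 0 1).indicator (· ^ α)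

/-- The weight `min (ρ^{1/2}) 1` of both suprema. It vanishes for `ρ ≤ 0`, by the convention
`√ρ = 0` there. -/
def sqrtWeight (ρ : ℝ) : ℝ :=
  min (√ρ) 1

lemma measurable_tailKernel : Measurable tailKernel :=
  measurable_one.indicator measurableSet_Ioi

lemma tailKernel_mem_Icc (s : ℝ) : tailKernel s ∈ Set.Icc 0 1 :=
  ⟨Set.indicator_nonneg (fun _ _ => zero_le_one) s,
    Set.indicator_le' (fun _ _ => le_rfl) (fun _ _ => zero_le_one) s⟩

lemma tendsto_tailKernel_zero : Tendsto tailKernel (𝓝 0) (𝓝 0) := by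
  refine tendsto_const_nhds.congr' ?_
  filter_upwards [Iio_mem_nhds (zero_lt_one (α := ℝ))] with s hs
  exact (Set.indicator_of_notMem (Set.notMem_Ioi.2 (Set.mem_Iio.1 hs).le) _).symm

lemma measurable_headKernel (α : ℝ) : Measurable (headKernel α) :=
  (measurable_id.pow_const α).indicator measurableSet_Ioc

lemma headKernel_mem_Icc {α : ℝ} (hα : 0 ≤ α) (s : ℝ) : headKernel α s ∈ Set.Icc 0 1 :=
  ⟨Set.indicator_nonneg (fun _ hs => rpow_nonneg hs.1.le α) s,
    Set.indicator_le' (fun _ hs => rpow_le_one hs.1.le hs.2 hα) (fun _ _ => zero_le_one) s⟩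

lemma tendsto_headKernel_zero {α : ℝ} (hα : 0 < α) : Tendsto (headKernel α) (𝓝 0) (𝓝 0) := by
  have hrpow : Tendsto (fun s : ℝ => ‖s ^ α‖) (𝓝 0) (𝓝 0) := by
    simpa only [zero_rpow hα.ne', norm_zero] using
      (continuousAt_rpow_const 0 α (.inr hα.le)).tendsto.norm
  exact squeeze_zero_norm (fun s => norm_indicator_le_norm_self _ s) hrpow

lemma sqrtWeight_mem_Icc (ρ : ℝ) : sqrtWeight ρ ∈ Set.Icc 0 1 :=
  ⟨le_min (sqrt_nonneg ρ) zero_le_one, min_le_right _ _⟩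

lemma sqrtWeight_zero : sqrtWeight 0 = 0 := by
  simp [sqrtWeight]

lemma tendsto_sqrtWeight_zero : Tendsto sqrtWeight (𝓝 0) (𝓝 0) := by
  have hcont : Continuous sqrtWeight := continuous_sqrt.min continuous_const
  simpa only [sqrtWeight_zero] using hcont.tendsto 0

lemma norm_le_one_of_mem_Icc {x : ℝ} (hx : x ∈ Set.Icc (0 : ℝ) 1) : ‖x‖ ≤ 1 := by
  rw [norm_of_nonneg hx.1]
  exact hx.2

lemma dilationIntegral_tailKernel (g : ℝ → ℝ) {t : ℝ} (ht : 0 < t) :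
    dilationIntegral (volume.restrict (Set.Ioi 0)) tailKernel g t
      = ∫ r in Set.Ioi t⁻¹, g r := by
  have hkernel (r : ℝ) : tailKernel (t * r) * g r = (Set.Ioi t⁻¹).indicator g r := by
    simp only [tailKernel, Set.indicator_apply, Set.mem_Ioi, inv_lt_iff_one_lt_mul₀' ht,
      Pi.one_apply, ite_mul, one_mul, zero_mul]
  simp only [dilationIntegral, hkernel]
  rw [setIntegral_indicator measurableSet_Ioi,
    Set.inter_eq_self_of_subset_right (Set.Ioi_subset_Ioi (inv_pos.2 ht).le)]

lemma dilationIntegral_headKernel (α : ℝ) (g : ℝ → ℝ) {t : ℝ} (ht : 0 < t) :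
    dilationIntegral (volume.restrict (Set.Ioi 0)) (headKernel α) g t
      = ∫ r in Set.Ioc 0 t⁻¹, (t * r) ^ α * g r := by
  have hkernel (r : ℝ) : headKernel α (t * r) * g r
      = (Set.Ioc 0 t⁻¹).indicator (fun r => (t * r) ^ α * g r) r := by
    simp only [headKernel, Set.indicator_apply, Set.mem_Ioc, mul_pos_iff_of_pos_left ht,
      ← le_inv_mul_iff₀ ht, mul_one, ite_mul, zero_mul]
  simp only [dilationIntegral, hkernel]
  rw [setIntegral_indicator measurableSet_Ioc,
    Set.inter_eq_self_of_subset_right Set.Ioc_subset_Ioi_self]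

end Kernels

lemma Astar_eq_dilationSup (φh : ℝ → ℝ) {ε : ℝ} (hε : 0 < ε) :
    Astar φh ε = dilationSup (Subtype.val : {x : ℝ // 0 ≤ x} → ℝ) sqrtWeight
      (volume.restrict (Set.Ioi 0)) tailKernel (fun r => r ^ 3 * φh r ^ 2) ε := by
  refine iSup_congr fun ⟨ρ, hρ⟩ => ?_
  change sqrtWeight ρ * _ = sqrtWeight ρ * _
  rcases hρ.eq_or_lt with rfl | hρ
  · rw [sqrtWeight_zero, zero_mul, zero_mul]
  · rw [dilationIntegral_tailKernel _ (div_pos hε hρ), inv_div]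

lemma AstarAlpha_eq_dilationSup (φh : ℝ → ℝ) (α : ℝ) {ε : ℝ} (hε : 0 < ε) :
    AstarAlpha φh α ε = dilationSup (Subtype.val : {x : ℝ // 0 < x} → ℝ) sqrtWeight
      (volume.restrict (Set.Ioi 0)) (headKernel α) (fun r => r ^ 3 * φh r ^ 2) ε := by
  refine iSup_congr fun ⟨ρ, hρ⟩ => ?_
  change sqrtWeight ρ * _ = sqrtWeight ρ * _
  rw [dilationIntegral_headKernel _ _ (div_pos hε hρ), inv_div]
  simp only [div_mul_eq_mul_div]

lemma tendsto_Astar_zero {φh : ℝ → ℝ}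
    (hint : IntegrableOn (fun r => r ^ 3 * φh r ^ 2) (Set.Ioi 0)) :
    Tendsto (Astar φh) (𝓝[>] 0) (𝓝 0) := by
  have hsup := tendsto_dilationSup_zero (Subtype.val : {x : ℝ // 0 ≤ x} → ℝ)
    (fun ρ => norm_le_one_of_mem_Icc (sqrtWeight_mem_Icc ρ)) tendsto_sqrtWeight_zero
    measurable_tailKernel (fun s => norm_le_one_of_mem_Icc (tailKernel_mem_Icc s))
    tendsto_tailKernel_zero hint
  refine (hsup.mono_left nhdsWithin_le_nhds).congr' ?_
  filter_upwards [self_mem_nhdsWithin] with ε hε using (Astar_eq_dilationSup φh hε).symm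

lemma tendsto_AstarAlpha_zero {φh : ℝ → ℝ} {α : ℝ} (hα : 0 < α)
    (hint : IntegrableOn (fun r => r ^ 3 * φh r ^ 2) (Set.Ioi 0)) :
    Tendsto (AstarAlpha φh α) (𝓝[>] 0) (𝓝 0) := by
  have hsup := tendsto_dilationSup_zero (Subtype.val : {x : ℝ // 0 < x} → ℝ)
    (fun ρ => norm_le_one_of_mem_Icc (sqrtWeight_mem_Icc ρ)) tendsto_sqrtWeight_zero
    (measurable_headKernel α) (fun s => norm_le_one_of_mem_Icc (headKernel_mem_Icc hα.le s))
    (tendsto_headKernel_zero hα) hint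
  refine (hsup.mono_left nhdsWithin_le_nhds).congr' ?_
  filter_upwards [self_mem_nhdsWithin] with ε hε using (AstarAlpha_eq_dilationSup φh α hε).symm

theorem stmt2_general (φh : ℝ → ℝ)
    (hint : IntegrableOn (fun r => r ^ 3 * φh r ^ 2) (Set.Ioi 0)) (α : ℝ) (hα : 0 < α) :
    (∀ ε : ℝ, 0 < ε → 0 ≤ Astar φh ε ∧
      Astar φh ε ≤ ∫ r in Set.Ioi (0 : ℝ), r ^ 3 * φh r ^ 2) ∧
    (∀ ε : ℝ, 0 < ε → 0 ≤ AstarAlpha φh α ε ∧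
      AstarAlpha φh α ε ≤ ∫ r in Set.Ioi (0 : ℝ), r ^ 3 * φh r ^ 2) ∧
    Tendsto (Astar φh) (𝓝[>] 0) (𝓝 0) ∧
    Tendsto (AstarAlpha φh α) (𝓝[>] 0) (𝓝 0) := by
  have hpos : 0 ≤ᵐ[volume.restrict (Set.Ioi 0)] fun r => r ^ 3 * φh r ^ 2 :=
    ae_restrict_of_forall_mem measurableSet_Ioi fun r hr =>
      mul_nonneg (pow_nonneg (Set.mem_Ioi.1 hr).le 3) (sq_nonneg _)
  have hw := sqrtWeight_mem_Icc
  have htail := tailKernel_mem_Icc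
  have hhead := headKernel_mem_Icc hα.le
  refine ⟨fun ε hε => ?_, fun ε hε => ?_, tendsto_Astar_zero hint,
    tendsto_AstarAlpha_zero hα hint⟩
  · rw [Astar_eq_dilationSup φh hε]
    exact ⟨dilationSup_nonneg _ (fun ρ => (hw ρ).1) (fun s => (htail s).1) hpos ε,
      dilationSup_le_integral _ (fun ρ => (hw ρ).2) htail hpos hint ε⟩
  · rw [AstarAlpha_eq_dilationSup φh α hε]
    exact ⟨dilationSup_nonneg _ (fun ρ => (hw ρ).1) (fun s => (hhead s).1) hpos ε,
      dilationSup_le_integral _ (fun ρ => (hw ρ).2) hhead hpos hint ε⟩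

/-- If `φ̂` is Borel measurable with `∫₀^∞ r³ φ̂(r)² dr = 1/(2π)` and `α > 0`,
then `0 ≤ A*_φ̂(ε) ≤ 1/(2π)` and `0 ≤ A*_{φ̂,α}(ε) ≤ 1/(2π)` for all `ε > 0`, and both
`A*_φ̂(ε) → 0` and `A*_{φ̂,α}(ε) → 0` as `ε → 0⁺`. -/
theorem stmt2 (φh : ℝ → ℝ) (hmeas : Measurable φh)
    (hnorm : ∫ r in Set.Ioi (0 : ℝ), r ^ 3 * (φh r) ^ 2 = 1 / (2 * π))
    (α : ℝ) (hα : 0 < α) :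
    (∀ ε : ℝ, 0 < ε → 0 ≤ Astar φh ε ∧ Astar φh ε ≤ 1 / (2 * π)) ∧
    (∀ ε : ℝ, 0 < ε → 0 ≤ AstarAlpha φh α ε ∧ AstarAlpha φh α ε ≤ 1 / (2 * π)) ∧
    Tendsto (Astar φh) (𝓝[>] 0) (𝓝 0) ∧
    Tendsto (AstarAlpha φh α) (𝓝[>] 0) (𝓝 0) := by
  -- A non-integrable function would have Bochner integral `0 ≠ 1/(2π)`.
  have hint : IntegrableOn (fun r => r ^ 3 * φh r ^ 2) (Set.Ioi 0) :=
    not_imp_comm.1 integral_undef (by rw [hnorm]; positivity)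
  exact hnorm ▸ stmt2_general φh hint α hα

end
end

section
/- Let φ̂ : [0,∞) → ℝ be Borel measurable with ∫₀^∞ r³ φ̂(r)² dr = 1/(2π), and let α > 0. Then for every ε > 0 and every ρ > 0: (i) 0 ≤ 1/(2πρ³) − ∫₀^{π/2} (ρ cos³θ sin θ / ε⁴) · φ̂(ρ cos θ / ε)² dθ ≤ A*_φ̂(ε) / (ρ³ · min(ρ^{1/2}, 1)); and (ii) ∫₀^{π/2} (ρ cos^{3+α}θ sin θ / ε⁴) · φ̂(ρ cos θ / ε)² dθ ≤ A*_{φ̂,α}(ε) / (ρ³ · min(ρ^{1/2}, 1)). -/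
/-!
The substitution `r = ρ cos θ / ε` turns the angular integrals into
`ρ⁻³ ∫₀^{ρ/ε} w(εr/ρ) r³ φ̂(r)² dr`, with `w = 1` in (i) and `w(u) = u^α` in (ii). In (i) the
difference is therefore the tail `ρ⁻³ ∫_{ρ/ε}^∞ r³ φ̂(r)² dr`. Tail and weighted integral,
multiplied by `min(ρ^{1/2}, 1)`, are single terms of the families whose suprema are `A*_φ̂(ε)` and
`A*_{φ̂,α}(ε)`. As `0 ≤ w ≤ 1` on `[0, 1]`, both families are bounded by `∫₀^∞ r³ φ̂(r)² dr`, so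
the real-valued suprema are genuine ones.
-/

open MeasureTheory Real Filter
open scoped Topology

noncomputable section

lemma integral_sin_smul_comp_cos {E : Type*} [NormedAddCommGroup E] [NormedSpace ℝ E] {a b : ℝ}
    (ha : a ∈ Set.Icc 0 π) (hb : b ∈ Set.Icc 0 π) (g : ℝ → E) :
    ∫ θ in a..b, sin θ • g (cos θ) = ∫ u in cos b..cos a, g u := by
  have hsin : ∀ θ ∈ Set.Ioo (min a b) (max a b), -sin θ ≤ 0 := fun θ hθ =>
    neg_nonpos.2 <| sin_nonneg_of_nonneg_of_le_pi
      ((le_min ha.1 hb.1).trans hθ.1.le) (hθ.2.le.trans (max_le ha.2 hb.2))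
  have hsubst := intervalIntegral.integral_deriv_smul_comp_of_deriv_nonpos (g := g)
    continuous_cos.continuousOn (fun θ _ => hasDerivAt_cos θ) hsin
  simp only [Function.comp_apply, neg_smul, intervalIntegral.integral_neg] at hsubst
  rw [intervalIntegral.integral_symm (cos a), ← hsubst, neg_neg]

lemma setIntegral_mul_mem_Icc {X : Type*} [MeasurableSpace X] {μ : Measure X} {s t : Set X}
    {f w : X → ℝ} (hs : MeasurableSet s) (ht : MeasurableSet t) (hst : s ⊆ t)
    (hf : IntegrableOn f t μ) (hf_nonneg : ∀ x ∈ t, 0 ≤ f x)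
    (hw : ∀ x ∈ s, w x ∈ Set.Icc (0 : ℝ) 1) :
    ∫ x in s, w x * f x ∂μ ∈ Set.Icc 0 (∫ x in t, f x ∂μ) := by
  have hwf_nonneg : ∀ x ∈ s, 0 ≤ w x * f x := fun x hx =>
    mul_nonneg (hw x hx).1 (hf_nonneg x (hst hx))
  have hwf_le : ∀ x ∈ s, w x * f x ≤ f x := fun x hx =>
    mul_le_of_le_one_left (hf_nonneg x (hst hx)) (hw x hx).2
  refine ⟨setIntegral_nonneg hs hwf_nonneg, ?_⟩
  calc
    ∫ x in s, w x * f x ∂μ ≤ ∫ x in s, f x ∂μ :=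
      integral_mono_of_nonneg (ae_restrict_of_forall_mem hs hwf_nonneg) (hf.mono_set hst)
        (ae_restrict_of_forall_mem hs hwf_le)
    _ ≤ ∫ x in t, f x ∂μ :=
      setIntegral_mono_set hf (ae_restrict_of_forall_mem ht hf_nonneg) hst.eventuallyLE

lemma le_ciSup_mul_div {ι : Sort*} {c F : ι → ℝ} {M : ℝ} (hc : ∀ j, c j ≤ 1)
    (hF : ∀ j, F j ∈ Set.Icc 0 M) {i : ι} (hi : 0 < c i) :
    F i ≤ (⨆ j, c j * F j) / c i := by
  have hbdd : BddAbove (Set.range fun j => c j * F j) :=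
    ⟨M, Set.forall_mem_range.2 fun j => (mul_le_of_le_one_left (hF j).1 (hc j)).trans (hF j).2⟩
  exact (le_div_iff₀' hi).2 (le_ciSup hbdd i)

lemma integral_weight_cos_mul_eq (φh w : ℝ → ℝ) {ε ρ : ℝ} (hε : ε ≠ 0) (hρ : ρ ≠ 0) :
    ∫ θ in (0 : ℝ)..(π / 2),
        w (cos θ) * ((ρ * cos θ ^ 3 * sin θ / ε ^ 4) * φh (ρ * cos θ / ε) ^ 2) =
      (∫ r in (0 : ℝ)..(ρ / ε), w (ε * r / ρ) * (r ^ 3 * φh r ^ 2)) / ρ ^ 3 := by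
  set G : ℝ → ℝ := fun r => w (ε * r / ρ) * (r ^ 3 * φh r ^ 2) with hG
  have hcos : ∫ θ in (0 : ℝ)..(π / 2), sin θ • G (ρ / ε * cos θ) =
      ∫ u in (0 : ℝ)..1, G (ρ / ε * u) := by
    simpa only [cos_zero, cos_pi_div_two] using
      integral_sin_smul_comp_cos ⟨le_rfl, pi_pos.le⟩
        ⟨pi_div_two_pos.le, half_le_self pi_pos.le⟩ fun u => G (ρ / ε * u)
  have hscale : (ρ / ε) * ∫ u in (0 : ℝ)..1, G (ρ / ε * u) = ∫ r in (0 : ℝ)..(ρ / ε), G r := by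
    simpa only [mul_zero, mul_one] using
      intervalIntegral.mul_integral_comp_mul_left (f := G) (a := 0) (b := 1) (ρ / ε)
  rw [← hscale, ← hcos, ← intervalIntegral.integral_const_mul, ← intervalIntegral.integral_div]
  refine intervalIntegral.integral_congr fun θ _ => ?_
  have hweight_arg : ε * (ρ / ε * cos θ) / ρ = cos θ := by field_simp
  have hφ_arg : ρ / ε * cos θ = ρ * cos θ / ε := div_mul_eq_mul_div ρ ε (cos θ)
  simp only [hG, smul_eq_mul, hweight_arg]
  rw [hφ_arg]
  field_simp

lemma integral_cos_pow_three_mul_eq (φh : ℝ → ℝ) {ε ρ : ℝ} (hε : ε ≠ 0) (hρ : ρ ≠ 0) :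
    ∫ θ in (0 : ℝ)..(π / 2), (ρ * cos θ ^ 3 * sin θ / ε ^ 4) * φh (ρ * cos θ / ε) ^ 2 =
      (∫ r in (0 : ℝ)..(ρ / ε), r ^ 3 * φh r ^ 2) / ρ ^ 3 := by
  simpa only [one_mul] using integral_weight_cos_mul_eq φh (fun _ => 1) hε hρ

lemma integral_cos_rpow_three_add_mul_eq (φh : ℝ → ℝ) {α ε ρ : ℝ} (hα : 0 ≤ α) (hε : ε ≠ 0)
    (hρ : ρ ≠ 0) :
    ∫ θ in (0 : ℝ)..(π / 2),
        (ρ * cos θ ^ ((3 : ℝ) + α) * sin θ / ε ^ 4) * φh (ρ * cos θ / ε) ^ 2 =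
      (∫ r in (0 : ℝ)..(ρ / ε), (ε * r / ρ) ^ α * (r ^ 3 * φh r ^ 2)) / ρ ^ 3 := by
  rw [← integral_weight_cos_mul_eq φh (· ^ α) hε hρ]
  refine intervalIntegral.integral_congr fun θ hθ => ?_
  rw [Set.uIcc_of_le pi_div_two_pos.le] at hθ
  have hcos : 0 ≤ cos θ := cos_nonneg_of_neg_pi_div_two_le_of_le (by linarith [hθ.1, pi_pos]) hθ.2
  have hsplit : cos θ ^ ((3 : ℝ) + α) = cos θ ^ 3 * cos θ ^ α := by
    rw [rpow_add_of_nonneg hcos zero_le_three hα, rpow_ofNat]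
  simp only [hsplit]
  ring

section RadialMass

variable {φh : ℝ → ℝ} {ε ρ : ℝ}

lemma setIntegral_weight_mul_radial_mem_Icc
    (hint : IntegrableOn (fun r => r ^ 3 * φh r ^ 2) (Set.Ioi 0)) {s : Set ℝ}
    (hs : MeasurableSet s) (hs_pos : s ⊆ Set.Ioi 0) {w : ℝ → ℝ}
    (hw : ∀ r ∈ s, w r ∈ Set.Icc (0 : ℝ) 1) :
    ∫ r in s, w r * (r ^ 3 * φh r ^ 2) ∈ Set.Icc 0 (∫ r in Set.Ioi (0 : ℝ), r ^ 3 * φh r ^ 2) :=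
  setIntegral_mul_mem_Icc hs measurableSet_Ioi hs_pos hint
    (fun _ hr => mul_nonneg (pow_nonneg (le_of_lt hr) 3) (sq_nonneg _)) hw

lemma setIntegral_Ioi_radial_mem_Icc
    (hint : IntegrableOn (fun r => r ^ 3 * φh r ^ 2) (Set.Ioi 0)) {a : ℝ} (ha : 0 ≤ a) :
    ∫ r in Set.Ioi a, r ^ 3 * φh r ^ 2 ∈ Set.Icc 0 (∫ r in Set.Ioi (0 : ℝ), r ^ 3 * φh r ^ 2) := by
  simpa only [one_mul] using setIntegral_weight_mul_radial_mem_Icc hint measurableSet_Ioi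
    (Set.Ioi_subset_Ioi ha) (w := fun _ => 1) fun _ _ => ⟨zero_le_one, le_rfl⟩

lemma setIntegral_Ioi_le_Astar_div (hint : IntegrableOn (fun r => r ^ 3 * φh r ^ 2) (Set.Ioi 0))
    (hε : 0 < ε) (hρ : 0 < ρ) :
    ∫ r in Set.Ioi (ρ / ε), r ^ 3 * φh r ^ 2 ≤ Astar φh ε / min √ρ 1 :=
  le_ciSup_mul_div (ι := {x : ℝ // 0 ≤ x}) (c := fun σ => min √σ 1)
    (F := fun σ => ∫ r in Set.Ioi ((σ : ℝ) / ε), r ^ 3 * φh r ^ 2) (i := ⟨ρ, hρ.le⟩)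
    (fun _ => min_le_right _ _)
    (fun σ => setIntegral_Ioi_radial_mem_Icc hint (div_nonneg σ.2 hε.le))
    (lt_min (sqrt_pos.2 hρ) one_pos)

lemma integral_rpow_mul_le_AstarAlpha_div
    (hint : IntegrableOn (fun r => r ^ 3 * φh r ^ 2) (Set.Ioi 0)) {α : ℝ} (hα : 0 ≤ α)
    (hε : 0 < ε) (hρ : 0 < ρ) :
    ∫ r in (0 : ℝ)..(ρ / ε), (ε * r / ρ) ^ α * (r ^ 3 * φh r ^ 2) ≤
      AstarAlpha φh α ε / min √ρ 1 := by
  have hweight : ∀ σ > 0, ∀ r ∈ Set.Ioc 0 (σ / ε), (ε * r / σ) ^ α ∈ Set.Icc (0 : ℝ) 1 := by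
    intro σ hσ r hr
    have hratio_nonneg : 0 ≤ ε * r / σ := div_nonneg (mul_nonneg hε.le hr.1.le) hσ.le
    have hratio_le : ε * r / σ ≤ 1 := (div_le_one hσ).2 ((le_div_iff₀' hε).1 hr.2)
    exact ⟨rpow_nonneg hratio_nonneg α, rpow_le_one hratio_nonneg hratio_le hα⟩
  rw [intervalIntegral.integral_of_le (div_pos hρ hε).le]
  exact le_ciSup_mul_div (ι := {x : ℝ // 0 < x}) (c := fun σ => min √σ 1)
    (F := fun σ => ∫ r in Set.Ioc 0 ((σ : ℝ) / ε), (ε * r / (σ : ℝ)) ^ α * (r ^ 3 * φh r ^ 2))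
    (i := ⟨ρ, hρ⟩) (fun _ => min_le_right _ _)
    (fun σ => setIntegral_weight_mul_radial_mem_Icc hint measurableSet_Ioc
      Set.Ioc_subset_Ioi_self (hweight σ σ.2))
    (lt_min (sqrt_pos.2 hρ) one_pos)

lemma radial_mass_div_sub_integral_cos_eq
    (hint : IntegrableOn (fun r => r ^ 3 * φh r ^ 2) (Set.Ioi 0)) (hε : 0 < ε) (hρ : 0 < ρ) :
    (∫ r in Set.Ioi (0 : ℝ), r ^ 3 * φh r ^ 2) / ρ ^ 3 -
        ∫ θ in (0 : ℝ)..(π / 2), (ρ * cos θ ^ 3 * sin θ / ε ^ 4) * φh (ρ * cos θ / ε) ^ 2 =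
      (∫ r in Set.Ioi (ρ / ε), r ^ 3 * φh r ^ 2) / ρ ^ 3 := by
  rw [integral_cos_pow_three_mul_eq φh hε.ne' hρ.ne', ← sub_div,
    ← intervalIntegral.integral_Ioi_sub_Ioi hint (div_pos hρ hε).le, sub_sub_cancel]

end RadialMass

theorem stmt3_general {φh : ℝ → ℝ}
    (hint : IntegrableOn (fun r => r ^ 3 * φh r ^ 2) (Set.Ioi 0))
    {α ε ρ : ℝ} (hα : 0 ≤ α) (hε : 0 < ε) (hρ : 0 < ρ) :
    (0 ≤ (∫ r in Set.Ioi (0 : ℝ), r ^ 3 * φh r ^ 2) / ρ ^ 3 -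
        ∫ θ in (0 : ℝ)..(π / 2), (ρ * cos θ ^ 3 * sin θ / ε ^ 4) * φh (ρ * cos θ / ε) ^ 2) ∧
    ((∫ r in Set.Ioi (0 : ℝ), r ^ 3 * φh r ^ 2) / ρ ^ 3 -
        (∫ θ in (0 : ℝ)..(π / 2), (ρ * cos θ ^ 3 * sin θ / ε ^ 4) * φh (ρ * cos θ / ε) ^ 2) ≤
      Astar φh ε / (ρ ^ 3 * min √ρ 1)) ∧
    ((∫ θ in (0 : ℝ)..(π / 2),
        (ρ * cos θ ^ ((3 : ℝ) + α) * sin θ / ε ^ 4) * φh (ρ * cos θ / ε) ^ 2) ≤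
      AstarAlpha φh α ε / (ρ ^ 3 * min √ρ 1)) := by
  have hρ3 : 0 ≤ ρ ^ 3 := pow_nonneg hρ.le 3
  rw [radial_mass_div_sub_integral_cos_eq hint hε hρ,
    integral_cos_rpow_three_add_mul_eq φh hα hε.ne' hρ.ne', mul_comm (ρ ^ 3), ← div_div, ← div_div]
  exact ⟨div_nonneg (setIntegral_Ioi_radial_mem_Icc hint (div_pos hρ hε).le).1 hρ3,
    div_le_div_of_nonneg_right (setIntegral_Ioi_le_Astar_div hint hε hρ) hρ3,
    div_le_div_of_nonneg_right (integral_rpow_mul_le_AstarAlpha_div hint hα hε hρ) hρ3⟩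

/-- If `φ̂` is Borel measurable with `∫₀^∞ r³ φ̂(r)² dr = 1/(2π)` and `α > 0`,
then for all `ε > 0` and `ρ > 0`:
(i) `0 ≤ 1/(2πρ³) − ∫₀^{π/2} (ρ cos³θ sinθ/ε⁴) φ̂(ρcosθ/ε)² dθ ≤ A*_φ̂(ε)/(ρ³ min(√ρ,1))`;
(ii) `∫₀^{π/2} (ρ cos^{3+α}θ sinθ/ε⁴) φ̂(ρcosθ/ε)² dθ ≤ A*_{φ̂,α}(ε)/(ρ³ min(√ρ,1))`. -/
theorem stmt3 (φh : ℝ → ℝ) (hmeas : Measurable φh)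
    (hnorm : ∫ r in Set.Ioi (0 : ℝ), r ^ 3 * (φh r) ^ 2 = 1 / (2 * π))
    (α : ℝ) (hα : 0 < α) (ε : ℝ) (hε : 0 < ε) (ρ : ℝ) (hρ : 0 < ρ) :
    (0 ≤ 1 / (2 * π * ρ ^ 3) -
        ∫ θ in (0 : ℝ)..(π / 2),
          (ρ * Real.cos θ ^ 3 * Real.sin θ / ε ^ 4) * (φh (ρ * Real.cos θ / ε)) ^ 2) ∧
    (1 / (2 * π * ρ ^ 3) -
        (∫ θ in (0 : ℝ)..(π / 2),
          (ρ * Real.cos θ ^ 3 * Real.sin θ / ε ^ 4) * (φh (ρ * Real.cos θ / ε)) ^ 2) ≤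
      Astar φh ε / (ρ ^ 3 * min (Real.sqrt ρ) 1)) ∧
    ((∫ θ in (0 : ℝ)..(π / 2),
          (ρ * Real.cos θ ^ ((3 : ℝ) + α) * Real.sin θ / ε ^ 4) *
            (φh (ρ * Real.cos θ / ε)) ^ 2) ≤
      AstarAlpha φh α ε / (ρ ^ 3 * min (Real.sqrt ρ) 1)) := by
  have hint := Integrable.of_integral_ne_zero (hnorm.trans_ne (by positivity))
  simpa only [hnorm, div_div] using stmt3_general hint hα.le hε hρ

end
end

section
/- Let k, d₁, …, d_k ∈ ℕ, and for each j let X_j ⊂ ℝ^{d_j} be a Borel set and μ_j ≥ 0 a regular Borel measure on X_j. Let f^n_j, f_j ∈ L¹(X_j, dμ_j) satisfy f^n_j ⇀ f_j weakly in L¹(X_j, dμ_j) as n → ∞, for j = 1, …, k. Let X = X₁ × ⋯ × X_k with product measure μ = μ₁ ⊗ ⋯ ⊗ μ_k, and let Ψ_n, Ψ be Borel measurable functions on X with sup_{n≥1, x∈X} |Ψ_n(x)| < ∞ and Ψ_n(x) → Ψ(x) for μ-a.e. x = (x₁, …, x_k) ∈ X. Then lim_{n→∞} ∫_X Ψ_n(x)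 f^n_1(x₁) ⋯ f^n_k(x_k) dμ(x) = ∫_X Ψ(x) f_1(x₁) ⋯ f_k(x_k) dμ(x). -/
open MeasureTheory Filter
open scoped Topology

/-!
The unit ball of `L^∞` with the `L¹` distance is a complete metric space, and the functionals
`φ ↦ ∫ φ * f n` are continuous on it. They converge pointwise, so by Baire's theorem they are
uniformly `ε`-Cauchy near some point `φ₀`. If `‖u n‖ ≤ 1` and `u n → 0` a.e., then
`(1 - ‖u n‖) • φ₀ + u n` and `(1 - ‖u n‖) • φ₀` stay in the ball, tend to `φ₀` and differ by `u n`;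
hence `∫ u n * f n → 0`. Consequently, whenever `f n ⇀ g` weakly in `L¹`, the integrals
`∫ u n * f n` converge to `∫ u₀ * g` for bounded sequences `u n → u₀` a.e.

Let now also `u n ⇀ v` weakly in `L¹` of a second space, and test `f n ⊗ u n` against a bounded `φ`.
The inner integrals `∫ φ (x, y) * u n y` converge for a.e. `x`, and they are bounded because
`‖u n‖₁` is, by Banach–Steinhaus. So the convergence just described, applied to `f n` and these
integrals, gives `f n ⊗ u n ⇀ g ⊗ v`. By induction the `k`-fold products converge weakly in `L¹` of
the product space, where the same convergence is applied once more, to `Ψn n → Ψ`.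
-/

open scoped ENNReal

section

variable {α β E 𝕜 : Type*} {mα : MeasurableSpace α} {mβ : MeasurableSpace β}
  [NormedAddCommGroup E] [RCLike 𝕜] {μ : Measure α} {ν : Measure β}

section BoundedMultipliers

theorem exists_ae_norm_le_of_memLp_top {φ : α → E} (hφ : MemLp φ ∞ μ) :
    ∃ C : ℝ, 0 ≤ C ∧ ∀ᵐ x ∂μ, ‖φ x‖ ≤ C := by
  refine ⟨(eLpNorm φ ∞ μ).toReal, ENNReal.toReal_nonneg, ?_⟩
  filter_upwards [enorm_ae_le_eLpNormEssSup φ μ] with x hx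
  rw [← toReal_enorm]
  exact ENNReal.toReal_mono hφ.eLpNorm_ne_top (by rwa [eLpNorm_exponent_top])

theorem exists_measurable_norm_le_ae_eq_of_memLp_top [MeasurableSpace E] [BorelSpace E]
    {φ : α → E} (hφ : MemLp φ ∞ μ) :
    ∃ ψ : α → E, Measurable ψ ∧ (∃ C : ℝ, ∀ x, ‖ψ x‖ ≤ C) ∧ φ =ᵐ[μ] ψ := by
  obtain ⟨C, hC, hφC⟩ := exists_ae_norm_le_of_memLp_top hφ
  obtain ⟨ψ, hψ, hrange, heq⟩ := hφ.aestronglyMeasurable.aemeasurable.exists_ae_eq_range_subset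
    (t := Metric.closedBall 0 C) (by simpa using hφC) ⟨0, by simpa⟩
  exact ⟨ψ, hψ, ⟨C, fun x ↦ by simpa using hrange (Set.mem_range_self x)⟩, heq⟩

theorem tendsto_integral_mul_of_ae_norm_le {f : α → 𝕜} (hf : Integrable f μ) {C : ℝ}
    {φ : ℕ → α → 𝕜} {φ₀ : α → 𝕜} (hm : ∀ n, AEStronglyMeasurable (φ n) μ)
    (hb : ∀ n, ∀ᵐ x ∂μ, ‖φ n x‖ ≤ C)
    (hlim : ∀ᵐ x ∂μ, Tendsto (fun n ↦ φ n x) atTop (𝓝 (φ₀ x))) :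
    Tendsto (fun n ↦ ∫ x, φ n x * f x ∂μ) atTop (𝓝 (∫ x, φ₀ x * f x ∂μ)) := by
  refine tendsto_integral_of_dominated_convergence (fun x ↦ C * ‖f x‖)
    (fun n ↦ (hm n).mul hf.1) (hf.norm.const_mul C) (fun n ↦ ?_) ?_
  · filter_upwards [hb n] with x hx
    rw [norm_mul]
    gcongr
  · filter_upwards [hlim] with x hx using hx.mul_const _

theorem norm_one_sub_norm_smul_le [NormedSpace ℝ E] {a b : E} (ha : ‖a‖ ≤ 1) (hb : ‖b‖ ≤ 1) :
    ‖(1 - ‖b‖) • a‖ ≤ 1 - ‖b‖ := by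
  have hb' : 0 ≤ 1 - ‖b‖ := sub_nonneg.2 hb
  rw [norm_smul, Real.norm_of_nonneg hb']
  exact mul_le_of_le_one_right hb' ha

theorem exists_Lp_top_mul_ae_eq_norm {f : α → 𝕜} (hf : AEStronglyMeasurable f μ) :
    ∃ s : Lp 𝕜 ∞ μ, ‖s‖ ≤ 1 ∧ ∀ᵐ x ∂μ, s x * f x = (‖f x‖ : 𝕜) := by
  let σ : α → 𝕜 := fun x ↦ (‖f x‖ : 𝕜)⁻¹ * starRingEnd 𝕜 (f x)
  have hσm : AEStronglyMeasurable σ μ := by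
    have hinv : Measurable fun t : ℝ ↦ (t : 𝕜)⁻¹ := by fun_prop
    exact (hinv.comp_aemeasurable hf.norm.aemeasurable).aestronglyMeasurable.mul
      (RCLike.continuous_conj.comp_aestronglyMeasurable hf)
  have hσb (x : α) : ‖σ x‖ ≤ 1 := by
    simpa [σ] using inv_mul_le_one
  have hσ : MemLp σ ∞ μ := memLp_top_of_bound hσm 1 (.of_forall hσb)
  refine ⟨hσ.toLp σ, ?_, ?_⟩
  · refine (Lp.norm_toLp σ hσ).trans_le (ENNReal.toReal_le_of_le_ofReal zero_le_one ?_)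
    rw [eLpNorm_exponent_top]
    exact eLpNormEssSup_le_of_ae_bound (.of_forall hσb)
  · filter_upwards [hσ.coeFn_toLp] with x hx
    rw [hx, mul_assoc, RCLike.conj_mul, sq, ← mul_assoc]
    exact inv_mul_mul_self _

end BoundedMultipliers

theorem exists_eventually_forall_ge_dist_le {X Y : Type*} [TopologicalSpace X] [BaireSpace X]
    [Nonempty X] [PseudoMetricSpace Y] {L : ℕ → X → Y} (hL : ∀ n, Continuous (L n))
    (hcauchy : ∀ x, CauchySeq fun n ↦ L n x) {ε : ℝ} (hε : 0 < ε) :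
    ∃ (x₀ : X) (N : ℕ), ∀ᶠ x in 𝓝 x₀, ∀ n ≥ N, dist (L n x) (L N x) ≤ ε := by
  let F : ℕ → Set X := fun N ↦ ⋂ n ≥ N, {x | dist (L n x) (L N x) ≤ ε}
  have hF_closed (N : ℕ) : IsClosed (F N) :=
    isClosed_biInter fun n _ ↦ isClosed_le ((hL n).dist (hL N)) continuous_const
  have hF_cover : ⋃ N, F N = Set.univ := by
    refine Set.eq_univ_of_forall fun x ↦ Set.mem_iUnion.2 ?_
    obtain ⟨N, hN⟩ := Metric.cauchySeq_iff'.1 (hcauchy x) ε hε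
    exact ⟨N, Set.mem_iInter₂.2 fun n hn ↦ (hN n hn).le⟩
  obtain ⟨N, x₀, hx₀⟩ := nonempty_interior_of_iUnion_of_closed hF_closed hF_cover
  refine ⟨x₀, N, ?_⟩
  filter_upwards [mem_interior_iff_mem_nhds.1 hx₀] with x hx n hn
  exact Set.mem_iInter₂.1 hx n hn

section LinftyUnitBall

/-- The closed unit ball of `L^∞(μ)` as a subset of `L¹(μ.toFinite)`, where `μ.toFinite` is a
finite measure with the null sets of `μ`. With the `L¹` distance it is a complete metric space in
which bounded a.e. convergence implies convergence. -/
def linftyUnitBall (𝕜 : Type*) [RCLike 𝕜] (μ : Measure α) [SFinite μ] :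
    Set (Lp 𝕜 1 μ.toFinite) :=
  {φ | ∀ᵐ x ∂μ, ‖φ x‖ ≤ 1}

variable [SFinite μ]

theorem exists_mem_linftyUnitBall_ae_eq {φ : α → 𝕜} (hm : AEStronglyMeasurable φ μ)
    (hb : ∀ᵐ x ∂μ, ‖φ x‖ ≤ 1) : ∃ u : linftyUnitBall 𝕜 μ, u.1 =ᵐ[μ] φ := by
  have hφ : MemLp φ 1 μ.toFinite :=
    .of_bound (hm.mono_ac (toFinite_absolutelyContinuous μ)) 1 (by rwa [ae_toFinite])
  have heq : hφ.toLp φ =ᵐ[μ] φ := (absolutelyContinuous_toFinite μ).ae_le hφ.coeFn_toLp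
  refine ⟨⟨hφ.toLp φ, ?_⟩, heq⟩
  filter_upwards [heq, hb] with x hx hbx
  rwa [hx]

theorem aestronglyMeasurable_linftyUnitBall (u : linftyUnitBall 𝕜 μ) :
    AEStronglyMeasurable u.1 μ :=
  (Lp.stronglyMeasurable u.1).aestronglyMeasurable

theorem exists_seq_tendsto_ae_of_tendsto_toFinite {u : ℕ → Lp 𝕜 1 μ.toFinite}
    {φ : Lp 𝕜 1 μ.toFinite} (hu : Tendsto u atTop (𝓝 φ)) :
    ∃ ns : ℕ → ℕ, StrictMono ns ∧ ∀ᵐ x ∂μ, Tendsto (fun n ↦ u (ns n) x) atTop (𝓝 (φ x)) := by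
  simpa only [ae_toFinite] using (tendstoInMeasure_of_tendsto_Lp hu).exists_seq_tendsto_ae

theorem isClosed_linftyUnitBall : IsClosed (linftyUnitBall 𝕜 μ) := by
  refine IsSeqClosed.isClosed fun u φ hu hlim ↦ ?_
  obtain ⟨ns, -, hns⟩ := exists_seq_tendsto_ae_of_tendsto_toFinite hlim
  filter_upwards [hns, ae_all_iff.2 hu] with x hx hux
  exact le_of_tendsto' hx.norm fun n ↦ hux (ns n)

theorem tendsto_linftyUnitBall_of_tendsto_ae {u : ℕ → linftyUnitBall 𝕜 μ}
    {φ : linftyUnitBall 𝕜 μ}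
    (h : ∀ᵐ x ∂μ, Tendsto (fun n ↦ (u n).1 x) atTop (𝓝 (φ.1 x))) :
    Tendsto u atTop (𝓝 φ) := by
  rw [tendsto_subtype_rng, Lp.tendsto_Lp_iff_tendsto_eLpNorm']
  have hdom := tendsto_lintegral_norm_of_dominated_convergence (μ := μ.toFinite)
    (F := fun n ↦ (u n).1) (f := φ.1) (bound := fun _ ↦ 1)
    (fun n ↦ (Lp.aestronglyMeasurable (u n).1)) (integrable_const (1 : ℝ)).2
    (fun n ↦ by rw [ae_toFinite]; exact (u n).2) (by rwa [ae_toFinite])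
  simpa only [eLpNorm_one_eq_lintegral_enorm, ofReal_norm, Pi.sub_apply] using hdom

theorem exists_seq_linftyUnitBall_tendsto {ψ : ℕ → α → 𝕜} {φ : linftyUnitBall 𝕜 μ}
    (hm : ∀ n, AEStronglyMeasurable (ψ n) μ) (hb : ∀ n, ∀ᵐ x ∂μ, ‖ψ n x‖ ≤ 1)
    (hlim : ∀ᵐ x ∂μ, Tendsto (fun n ↦ ψ n x) atTop (𝓝 (φ.1 x))) :
    ∃ u : ℕ → linftyUnitBall 𝕜 μ, (∀ n, (u n).1 =ᵐ[μ] ψ n) ∧ Tendsto u atTop (𝓝 φ) := by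
  choose u hu using fun n ↦ exists_mem_linftyUnitBall_ae_eq (hm n) (hb n)
  refine ⟨u, hu, tendsto_linftyUnitBall_of_tendsto_ae ?_⟩
  filter_upwards [ae_all_iff.2 hu, hlim] with x hux hx
  simpa only [hux] using hx

theorem exists_seq_linftyUnitBall_sub_ae_eq (φ : linftyUnitBall 𝕜 μ) {u : ℕ → α → 𝕜}
    (hm : ∀ n, AEStronglyMeasurable (u n) μ) (hb : ∀ n, ∀ᵐ x ∂μ, ‖u n x‖ ≤ 1)
    (hlim : ∀ᵐ x ∂μ, Tendsto (fun n ↦ u n x) atTop (𝓝 0)) :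
    ∃ v w : ℕ → linftyUnitBall 𝕜 μ, Tendsto v atTop (𝓝 φ) ∧ Tendsto w atTop (𝓝 φ) ∧
      ∀ n, u n =ᵐ[μ] (w n).1 - (v n).1 := by
  let ψ (n : ℕ) (x : α) : 𝕜 := (1 - ‖u n x‖) • φ.1 x
  have hψ_meas (n : ℕ) : AEStronglyMeasurable (ψ n) μ :=
    (aestronglyMeasurable_const.sub (hm n).norm).smul (aestronglyMeasurable_linftyUnitBall φ)
  have hψ_le (n : ℕ) : ∀ᵐ x ∂μ, ‖ψ n x‖ ≤ 1 - ‖u n x‖ := by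
    filter_upwards [hb n, φ.2] with x hux hφx using norm_one_sub_norm_smul_le hφx hux
  have hψ_lim : ∀ᵐ x ∂μ, Tendsto (fun n ↦ ψ n x) atTop (𝓝 (φ.1 x)) := by
    filter_upwards [hlim] with x hux
    simpa using (hux.norm.const_sub 1).smul_const (φ.1 x)
  obtain ⟨v, hv, hv_lim⟩ := exists_seq_linftyUnitBall_tendsto (φ := φ) hψ_meas
    (fun n ↦ (hψ_le n).mono fun x hx ↦ hx.trans (by simp)) hψ_lim
  obtain ⟨w, hw, hw_lim⟩ := exists_seq_linftyUnitBall_tendsto (φ := φ) (ψ := fun n ↦ ψ n + u n)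
    (fun n ↦ (hψ_meas n).add (hm n))
    (fun n ↦ (hψ_le n).mono fun x hx ↦ (norm_add_le (ψ n x) (u n x)).trans (by linarith))
    (by filter_upwards [hψ_lim, hlim] with x hx hux using by simpa using hx.add hux)
  refine ⟨v, w, hv_lim, hw_lim, fun n ↦ ?_⟩
  filter_upwards [hv n, hw n] with x hvx hwx
  simp [hvx, hwx]

theorem continuous_integral_mul_linftyUnitBall {f : α → 𝕜} (hf : Integrable f μ) :
    Continuous fun φ : linftyUnitBall 𝕜 μ ↦ ∫ x, φ.1 x * f x ∂μ := by
  refine continuous_iff_seqContinuous.2 fun u φ hu ↦ tendsto_of_subseq_tendsto fun ns hns ↦ ?_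
  obtain ⟨ms, -, hms⟩ := exists_seq_tendsto_ae_of_tendsto_toFinite
    ((continuous_subtype_val.tendsto φ).comp (hu.comp hns))
  exact ⟨ms, tendsto_integral_mul_of_ae_norm_le hf
    (fun n ↦ aestronglyMeasurable_linftyUnitBall _) (fun n ↦ (u (ns (ms n))).2) hms⟩

end LinftyUnitBall

/-- Weak convergence `f n ⇀ g` in `L¹(μ)` along a sequence: all functions involved are integrable,
and the integrals against every `φ ∈ L^∞(μ)` converge. -/
structure WeakTendstoL1 (μ : Measure α) (f : ℕ → α → 𝕜) (g : α → 𝕜) : Prop where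
  integrable : ∀ n, Integrable (f n) μ
  integrable_limit : Integrable g μ
  tendsto_integral : ∀ φ : α → 𝕜, MemLp φ ∞ μ →
    Tendsto (fun n ↦ ∫ x, φ x * f n x ∂μ) atTop (𝓝 (∫ x, φ x * g x ∂μ))

namespace WeakTendstoL1

variable {f : ℕ → α → 𝕜} {g : α → 𝕜}

theorem const (hg : Integrable g μ) : WeakTendstoL1 μ (fun _ ↦ g) g :=
  ⟨fun _ ↦ hg, hg, fun _ _ ↦ tendsto_const_nhds⟩

theorem of_forall_measurable_bounded (hf : ∀ n, Integrable (f n) μ) (hg : Integrable g μ)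
    (h : ∀ φ : α → 𝕜, Measurable φ → (∃ C : ℝ, ∀ x, ‖φ x‖ ≤ C) →
      Tendsto (fun n ↦ ∫ x, φ x * f n x ∂μ) atTop (𝓝 (∫ x, φ x * g x ∂μ))) :
    WeakTendstoL1 μ f g := by
  refine ⟨hf, hg, fun φ hφ ↦ ?_⟩
  obtain ⟨ψ, hψ, hψb, heq⟩ := exists_measurable_norm_le_ae_eq_of_memLp_top hφ
  have hcongr (u : α → 𝕜) : ∫ x, φ x * u x ∂μ = ∫ x, ψ x * u x ∂μ :=
    integral_congr_ae (heq.mul .rfl)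
  simpa only [hcongr] using h ψ hψ hψb

theorem exists_integral_norm_le (h : WeakTendstoL1 μ f g) :
    ∃ C : ℝ, ∀ n, ∫ x, ‖f n x‖ ∂μ ≤ C := by
  let T (n : ℕ) : Lp 𝕜 ∞ μ →L[𝕜] 𝕜 :=
    ((ContinuousLinearMap.mul 𝕜 𝕜).lpPairing μ ∞ 1).flip ((h.integrable n).toL1 (f n))
  have hT (n : ℕ) (φ : Lp 𝕜 ∞ μ) : T n φ = ∫ x, φ x * f n x ∂μ := by
    simp only [T, ContinuousLinearMap.flip_apply, ContinuousLinearMap.lpPairing_eq_integral,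
      ContinuousLinearMap.mul_apply']
    exact integral_congr_ae ((ae_eq_refl φ).mul (h.integrable n).coeFn_toL1)
  have hbdd (φ : Lp 𝕜 ∞ μ) : ∃ C, ∀ n, ‖T n φ‖ ≤ C := by
    simp only [hT]
    obtain ⟨C, hC⟩ := (h.tendsto_integral φ (Lp.memLp φ)).norm.bddAbove_range
    exact ⟨C, fun n ↦ hC (Set.mem_range_self n)⟩
  obtain ⟨C, hC⟩ := banach_steinhaus hbdd
  refine ⟨C, fun n ↦ ?_⟩
  obtain ⟨s, hs, hsf⟩ := exists_Lp_top_mul_ae_eq_norm (h.integrable n).aestronglyMeasurable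
  calc ∫ x, ‖f n x‖ ∂μ
      = ‖T n s‖ := by
        rw [hT, integral_congr_ae hsf, integral_ofReal, RCLike.norm_ofReal,
          abs_of_nonneg (integral_nonneg fun x ↦ norm_nonneg _)]
    _ ≤ ‖T n‖ := (T n).unit_le_opNorm s hs
    _ ≤ C := hC n

section EquiIntegrability

variable [SFinite μ]

theorem exists_eventually_linftyUnitBall_dist_le (h : WeakTendstoL1 μ f g) {ε : ℝ} (hε : 0 < ε) :
    ∃ (φ₀ : linftyUnitBall 𝕜 μ) (N : ℕ), ∀ᶠ φ in 𝓝 φ₀, ∀ n ≥ N,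
      dist (∫ x, φ.1 x * f n x ∂μ) (∫ x, φ.1 x * f N x ∂μ) ≤ ε := by
  have : CompleteSpace (linftyUnitBall 𝕜 μ) := isClosed_linftyUnitBall.completeSpace_coe
  have : Nonempty (linftyUnitBall 𝕜 μ) :=
    (exists_mem_linftyUnitBall_ae_eq (φ := 0) aestronglyMeasurable_zero (by simp)).nonempty
  refine exists_eventually_forall_ge_dist_le
    (fun n ↦ continuous_integral_mul_linftyUnitBall (h.integrable n)) (fun φ ↦ ?_) hε
  exact (h.tendsto_integral φ.1
    (memLp_top_of_bound (aestronglyMeasurable_linftyUnitBall φ) 1 φ.2)).cauchySeq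

theorem exists_eventually_dist_le (h : WeakTendstoL1 μ f g) {u : ℕ → α → 𝕜}
    (hm : ∀ n, AEStronglyMeasurable (u n) μ) (hb : ∀ n, ∀ᵐ x ∂μ, ‖u n x‖ ≤ 1)
    (hlim : ∀ᵐ x ∂μ, Tendsto (fun n ↦ u n x) atTop (𝓝 0)) {ε : ℝ} (hε : 0 < ε) :
    ∃ N, ∀ᶠ m in atTop, ∀ n ≥ N,
      dist (∫ x, u m x * f n x ∂μ) (∫ x, u m x * f N x ∂μ) ≤ ε := by
  obtain ⟨φ₀, N, hN⟩ := h.exists_eventually_linftyUnitBall_dist_le (half_pos hε)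
  obtain ⟨v, w, hv, hw, huvw⟩ := exists_seq_linftyUnitBall_sub_ae_eq φ₀ hm hb hlim
  have hsplit (m k : ℕ) :
      ∫ x, u m x * f k x ∂μ = ∫ x, (w m).1 x * f k x ∂μ - ∫ x, (v m).1 x * f k x ∂μ := by
    have hint (φ : linftyUnitBall 𝕜 μ) : Integrable (fun x ↦ φ.1 x * f k x) μ :=
      (h.integrable k).bdd_mul (aestronglyMeasurable_linftyUnitBall φ) φ.2
    rw [← integral_sub (hint _) (hint _)]
    refine integral_congr_ae ?_
    filter_upwards [huvw m] with x hx
    rw [hx, Pi.sub_apply, sub_mul]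
  refine ⟨N, ?_⟩
  filter_upwards [hv.eventually hN, hw.eventually hN] with m hvm hwm n hn
  rw [hsplit, hsplit]
  exact (dist_sub_sub_le_of_le (hwm n hn) (hvm n hn)).trans_eq (add_halves ε)

theorem tendsto_integral_mul_of_tendsto_zero (h : WeakTendstoL1 μ f g) {u : ℕ → α → 𝕜}
    (hm : ∀ n, AEStronglyMeasurable (u n) μ) (hb : ∀ n, ∀ᵐ x ∂μ, ‖u n x‖ ≤ 1)
    (hlim : ∀ᵐ x ∂μ, Tendsto (fun n ↦ u n x) atTop (𝓝 0)) :
    Tendsto (fun n ↦ ∫ x, u n x * f n x ∂μ) atTop (𝓝 0) := by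
  refine Metric.tendsto_nhds.2 fun ε hε ↦ ?_
  obtain ⟨N, hN⟩ := h.exists_eventually_dist_le hm hb hlim (half_pos hε)
  have hfix : Tendsto (fun n ↦ ∫ x, u n x * f N x ∂μ) atTop (𝓝 0) := by
    simpa using tendsto_integral_mul_of_ae_norm_le (φ₀ := 0) (h.integrable N) hm hb hlim
  filter_upwards [hN, Metric.tendsto_nhds.1 hfix _ (half_pos hε), eventually_ge_atTop N]
    with n hn hfixn hnN
  calc dist (∫ x, u n x * f n x ∂μ) 0
      ≤ dist (∫ x, u n x * f n x ∂μ) (∫ x, u n x * f N x ∂μ)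
        + dist (∫ x, u n x * f N x ∂μ) 0 := dist_triangle _ _ _
    _ < ε / 2 + ε / 2 := add_lt_add_of_le_of_lt (hn n hnN) hfixn
    _ = ε := add_halves ε

theorem tendsto_integral_mul (h : WeakTendstoL1 μ f g) {u : ℕ → α → 𝕜} {u₀ : α → 𝕜} {C : ℝ}
    (hm : ∀ n, AEStronglyMeasurable (u n) μ) (hb : ∀ n, ∀ᵐ x ∂μ, ‖u n x‖ ≤ C)
    (hlim : ∀ᵐ x ∂μ, Tendsto (fun n ↦ u n x) atTop (𝓝 (u₀ x))) :
    Tendsto (fun n ↦ ∫ x, u n x * f n x ∂μ) atTop (𝓝 (∫ x, u₀ x * g x ∂μ)) := by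
  have hm₀ : AEStronglyMeasurable u₀ μ := aestronglyMeasurable_of_tendsto_ae atTop hm hlim
  have hb₀ : ∀ᵐ x ∂μ, ‖u₀ x‖ ≤ C := by
    filter_upwards [ae_all_iff.2 hb, hlim] with x hbx hx using le_of_tendsto' hx.norm hbx
  let D : ℝ := 2 * |C| + 1
  have hD : 0 < D := by positivity
  have hrescaled : Tendsto (fun n ↦ ∫ x, (D⁻¹ • (u n x - u₀ x)) * f n x ∂μ) atTop (𝓝 0) := by
    refine h.tendsto_integral_mul_of_tendsto_zero
      (fun n ↦ ((hm n).sub hm₀).const_smul D⁻¹) (fun n ↦ ?_) ?_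
    · filter_upwards [hb n, hb₀] with x hux hu₀x
      rw [norm_smul, norm_inv, Real.norm_of_nonneg hD.le, inv_mul_le_one₀ hD]
      linarith [norm_sub_le (u n x) (u₀ x), le_abs_self C]
    · filter_upwards [hlim] with x hx
      simpa using (hx.sub_const (u₀ x)).const_smul D⁻¹
  have hsplit (n : ℕ) : D • ∫ x, (D⁻¹ • (u n x - u₀ x)) * f n x ∂μ + ∫ x, u₀ x * f n x ∂μ
      = ∫ x, u n x * f n x ∂μ := by
    rw [← integral_smul, ← eq_sub_iff_add_eq, ← integral_sub
      ((h.integrable n).bdd_mul (hm n) (hb n)) ((h.integrable n).bdd_mul hm₀ hb₀)]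
    simp only [smul_mul_assoc, smul_inv_smul₀ hD.ne', sub_mul]
  simpa only [smul_zero, zero_add, hsplit] using
    (hrescaled.const_smul D).add (h.tendsto_integral u₀ (memLp_top_of_bound hm₀ C hb₀))

end EquiIntegrability

end WeakTendstoL1

section Product

variable [SFinite ν] {φ : α × β → 𝕜}

theorem integral_prod_mul_mul [SFinite μ] {a : α → 𝕜} {b : β → 𝕜} (hφ : MemLp φ ∞ (μ.prod ν))
    (ha : Integrable a μ) (hb : Integrable b ν) :
    ∫ z, φ z * (a z.1 * b z.2) ∂μ.prod ν = ∫ x, (∫ y, φ (x, y) * b y ∂ν) * a x ∂μ := by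
  obtain ⟨C, -, hC⟩ := exists_ae_norm_le_of_memLp_top hφ
  rw [integral_prod _ ((ha.mul_prod hb).bdd_mul hφ.1 hC)]
  congr with x
  rw [← integral_mul_const]
  congr with y
  ring

theorem ae_norm_integral_mul_le {C : ℝ} (hφ : ∀ᵐ z ∂μ.prod ν, ‖φ z‖ ≤ C) {b : β → 𝕜}
    (hb : Integrable b ν) : ∀ᵐ x ∂μ, ‖∫ y, φ (x, y) * b y ∂ν‖ ≤ C * ∫ y, ‖b y‖ ∂ν := by
  filter_upwards [Measure.ae_ae_of_ae_prod hφ] with x hx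
  rw [← integral_const_mul]
  refine norm_integral_le_of_norm_le (hb.norm.const_mul C) ?_
  filter_upwards [hx] with y hy
  rw [norm_mul]
  gcongr

end Product

namespace WeakTendstoL1

theorem prod [SFinite μ] [SFinite ν] {f : ℕ → α → 𝕜} {g : α → 𝕜} {u : ℕ → β → 𝕜} {v : β → 𝕜}
    (hf : WeakTendstoL1 μ f g) (hu : WeakTendstoL1 ν u v) :
    WeakTendstoL1 (μ.prod ν) (fun n z ↦ f n z.1 * u n z.2) (fun z ↦ g z.1 * v z.2) := by
  refine ⟨fun n ↦ (hf.integrable n).mul_prod (hu.integrable n),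
    hf.integrable_limit.mul_prod hu.integrable_limit, fun φ hφ ↦ ?_⟩
  simp only [integral_prod_mul_mul hφ (hf.integrable _) (hu.integrable _),
    integral_prod_mul_mul hφ hf.integrable_limit hu.integrable_limit]
  obtain ⟨C, hC, hφC⟩ := exists_ae_norm_le_of_memLp_top hφ
  obtain ⟨D, hD⟩ := hu.exists_integral_norm_le
  refine hf.tendsto_integral_mul (C := C * D) (fun n ↦ ?_) (fun n ↦ ?_) ?_
  · exact (hφ.1.mul (hu.integrable n).1.comp_snd).integral_prod_right'
  · filter_upwards [ae_norm_integral_mul_le hφC (hu.integrable n)] with x hx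
    exact hx.trans (mul_le_mul_of_nonneg_left (hD n) hC)
  · filter_upwards [hφ.1.prodMk_left, Measure.ae_ae_of_ae_prod hφC] with x hmx hbx
    exact hu.tendsto_integral _ (memLp_top_of_bound hmx C hbx)

theorem of_comp_measurableEquiv {f : ℕ → β → 𝕜} {g : β → 𝕜} (e : α ≃ᵐ β)
    (he : MeasurePreserving e μ ν) (h : WeakTendstoL1 μ (fun n ↦ f n ∘ e) (g ∘ e)) :
    WeakTendstoL1 ν f g := by
  have hint {u : β → 𝕜} : Integrable (u ∘ e) μ → Integrable u ν :=
    (he.integrable_comp_emb e.measurableEmbedding).1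
  refine ⟨fun n ↦ hint (h.integrable n), hint h.integrable_limit, fun φ hφ ↦ ?_⟩
  simpa only [Function.comp_apply, he.integral_comp' (fun x ↦ φ x * _)] using
    h.tendsto_integral (φ ∘ e) (hφ.comp_measurePreserving he)

theorem pi_fin {k : ℕ} {X : Fin k → Type*} [∀ j, MeasurableSpace (X j)]
    {μ : ∀ j, Measure (X j)} [∀ j, SigmaFinite (μ j)] {f : ℕ → ∀ j, X j → 𝕜}
    {g : ∀ j, X j → 𝕜} (h : ∀ j, WeakTendstoL1 (μ j) (fun n ↦ f n j) (g j)) :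
    WeakTendstoL1 (Measure.pi μ) (fun n x ↦ ∏ j, f n j (x j)) (fun x ↦ ∏ j, g j (x j)) := by
  induction k with
  | zero =>
    simp only [Finset.univ_eq_empty, Finset.prod_empty, Measure.pi_of_empty μ]
    exact .const (integrable_const 1)
  | succ k ih =>
    refine of_comp_measurableEquiv _ (measurePreserving_piFinSuccAbove μ 0).symm ?_
    simp only [Function.comp_def, Fin.prod_univ_succ]
    exact (h 0).prod (ih fun j ↦ h j.succ)

theorem pi {ι : Type*} [Fintype ι] {X : ι → Type*} [∀ i, MeasurableSpace (X i)]
    {μ : ∀ i, Measure (X i)} [∀ i, SigmaFinite (μ i)] {f : ℕ → ∀ i, X i → 𝕜}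
    {g : ∀ i, X i → 𝕜} (h : ∀ i, WeakTendstoL1 (μ i) (fun n ↦ f n i) (g i)) :
    WeakTendstoL1 (Measure.pi μ) (fun n x ↦ ∏ i, f n i (x i)) (fun x ↦ ∏ i, g i (x i)) := by
  let e := (Fintype.equivFin ι).symm
  refine of_comp_measurableEquiv _ (measurePreserving_piCongrLeft μ e) ?_
  simpa only [Function.comp_def, ← e.prod_comp, MeasurableEquiv.coe_piCongrLeft,
    Equiv.piCongrLeft_apply_apply] using pi_fin fun j ↦ h (e j)

end WeakTendstoL1

end

theorem stmt6_general {ι 𝕜 : Type*} [Fintype ι] [RCLike 𝕜]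
    {X : ι → Type*} [∀ i, MeasurableSpace (X i)]
    {μ : ∀ i, Measure (X i)} [∀ i, SigmaFinite (μ i)] {f : ℕ → ∀ i, X i → 𝕜}
    {g : ∀ i, X i → 𝕜} (h : ∀ i, WeakTendstoL1 (μ i) (fun n ↦ f n i) (g i))
    {Ψn : ℕ → (∀ i, X i) → 𝕜} {Ψ : (∀ i, X i) → 𝕜} {C : ℝ}
    (hm : ∀ n, AEStronglyMeasurable (Ψn n) (Measure.pi μ))
    (hb : ∀ n, ∀ᵐ x ∂(Measure.pi μ), ‖Ψn n x‖ ≤ C)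
    (hlim : ∀ᵐ x ∂(Measure.pi μ), Tendsto (fun n ↦ Ψn n x) atTop (𝓝 (Ψ x))) :
    Tendsto (fun n ↦ ∫ x, Ψn n x * ∏ i, f n i (x i) ∂(Measure.pi μ)) atTop
      (𝓝 (∫ x, Ψ x * ∏ i, g i (x i) ∂(Measure.pi μ))) :=
  (WeakTendstoL1.pi h).tendsto_integral_mul hm hb hlim

/-- A product of weakly-`L¹` convergent sequences times a uniformly bounded,
a.e. pointwise convergent sequence of measurable functions: the integrals converge. -/
theorem stmt6 (k : ℕ) (d : Fin k → ℕ)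
    (X : ∀ j, Set (EuclideanSpace ℝ (Fin (d j)))) (hX : ∀ j, MeasurableSet (X j))
    (μ : ∀ j, Measure (X j)) [∀ j, SigmaFinite (μ j)] (hreg : ∀ j, (μ j).Regular)
    (f : ℕ → ∀ j, (X j) → ℝ) (g : ∀ j, (X j) → ℝ)
    (hfint : ∀ n j, Integrable (f n j) (μ j)) (hgint : ∀ j, Integrable (g j) (μ j))
    (hweak : ∀ j, ∀ φ : (X j) → ℝ, Measurable φ → (∃ C : ℝ, ∀ x, |φ x| ≤ C) →
      Tendsto (fun n => ∫ x, φ x * f n j x ∂(μ j)) atTop (𝓝 (∫ x, φ x * g j x ∂(μ j))))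
    (Ψn : ℕ → (∀ j, X j) → ℝ) (Ψ : (∀ j, X j) → ℝ)
    (hΨnmeas : ∀ n, Measurable (Ψn n)) (hΨmeas : Measurable Ψ)
    (hΨbd : ∃ C : ℝ, ∀ n x, |Ψn n x| ≤ C)
    (hΨconv : ∀ᵐ x ∂(Measure.pi μ), Tendsto (fun n => Ψn n x) atTop (𝓝 (Ψ x))) :
    Tendsto (fun n => ∫ x, Ψn n x * ∏ j, f n j (x j) ∂(Measure.pi μ)) atTop
      (𝓝 (∫ x, Ψ x * ∏ j, g j (x j) ∂(Measure.pi μ))) := by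
  obtain ⟨C, hC⟩ := hΨbd
  exact stmt6_general
    (fun j ↦ .of_forall_measurable_bounded (hfint · j) (hgint j) (hweak j))
    (fun n ↦ (hΨnmeas n).aestronglyMeasurable) (fun n ↦ .of_forall (hC n)) hΨconv
end

section
/- There is an absolute constant C₀ ∈ (0, ∞) such that for all α with 0 ≤ α < 1 and all y, z ≥ 0: ∫_{S²×S²} [ (y−z)² + yz(1 − (ω·ω_*)²) ] / |√(2y)ω − √(2z)ω_*|^{3+α} dω dω_* ≤ (C₀/(1−α)) ( y^{(1−α)/2} + z^{(1−α)/2} ). -/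
/-!
Write `D = ‖√(2y) ω - √(2z) ω'‖` and `R = max √(2y) √(2z)`. Expanding
`D² = (a - b)² + 2ab(1 - ω·ω')` with `a = √(2y)`, `b = √(2z)` shows that the numerator is at most
`R² D²`, so the integrand is at most `R² D^{-(1+α)}`. Since `R ‖ω - ω'‖ ≤ 2D`, it remains to
integrate `‖ω - ω'‖^{-(1+α)}` over the sphere. In dimension `d` a cap of radius `r` has measure
`O(r^{d-1})`, because the cone over it is covered by `O(1/r)` balls of radius `2r`; the layer-cake
formula then bounds the integral by `O(1/(d-2-α))`.

Where `D = 0` both `D^{-(1+α)}` and the integrand take the junk value `0`. Applying the layer-cake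
bound to `2D/R`, which dominates `‖ω - ω'‖`, rather than to `‖ω - ω'‖` itself spares the removal of
a null set.
-/

open MeasureTheory Real
open scoped RealInnerProductSpace ENNReal

noncomputable section

/-- The surface measure on the unit sphere `S² ⊂ ℝ³` (total mass `4π`). -/
noncomputable def sphM : Measure (Metric.sphere (0 : E3) 1) :=
  (volume : Measure E3).toSphere

open Set Metric

section LayerCake

theorem lintegral_Ioi_rpow_of_lt {p c : ℝ} (hp : p < -1) (hc : 0 < c) :
    ∫⁻ t in Ioi c, ENNReal.ofReal (t ^ p) = ENNReal.ofReal (-c ^ (p + 1) / (p + 1)) := by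
  have hnonneg : ∀ᵐ t ∂volume.restrict (Ioi c), 0 ≤ t ^ p := by
    filter_upwards [ae_restrict_mem measurableSet_Ioi] with t ht
    exact rpow_nonneg (hc.trans ht).le p
  rw [← ofReal_integral_eq_lintegral_ofReal (integrableOn_Ioi_rpow_of_lt hp hc) hnonneg,
    integral_Ioi_rpow_of_lt hp hc]

theorem le_rpow_inv_neg_of_lt_rpow_neg {x t β : ℝ} (hx : 0 ≤ x) (ht : 0 < t) (hβ : 0 < β)
    (h : t < x ^ (-β)) : x ≤ t ^ (-β)⁻¹ := by
  rcases hx.eq_or_lt with rfl | hx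
  · exact rpow_nonneg ht.le _
  · exact (le_rpow_inv_iff_of_neg hx ht (neg_neg_of_pos hβ)).2 h.le

variable {X : Type*} [MeasurableSpace X] {ν : Measure X} {f : X → ℝ} {C : ℝ≥0∞} {s β : ℝ}

theorem measure_lt_rpow_neg_le (hf₀ : ∀ x, 0 ≤ f x) (hβ : 0 < β)
    (hν : ∀ r, 0 < r → r ≤ 1 → ν {x | f x ≤ r} ≤ C * ENNReal.ofReal (r ^ s)) {t : ℝ}
    (ht : 1 ≤ t) :
    ν {x | t < f x ^ (-β)} ≤ C * ENNReal.ofReal (t ^ (-(s / β))) := by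
  have ht₀ : 0 < t := one_pos.trans_le ht
  have hr : t ^ (-β)⁻¹ ≤ 1 := rpow_le_one_of_one_le_of_nonpos ht (by simpa using hβ.le)
  have hsub : {x | t < f x ^ (-β)} ⊆ {x | f x ≤ t ^ (-β)⁻¹} := fun x hx ↦
    le_rpow_inv_neg_of_lt_rpow_neg (hf₀ x) ht₀ hβ hx
  calc ν {x | t < f x ^ (-β)}
      ≤ C * ENNReal.ofReal ((t ^ (-β)⁻¹) ^ s) :=
        (measure_mono hsub).trans (hν _ (rpow_pos_of_pos ht₀ _) hr)
    _ = C * ENNReal.ofReal (t ^ (-(s / β))) := by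
        rw [← rpow_mul ht₀.le, inv_neg, neg_mul, inv_mul_eq_div]

theorem lintegral_rpow_neg_le (hf : Measurable f) (hf₀ : ∀ x, 0 ≤ f x) (hβ : 0 ≤ β) (hβs : β < s)
    (hν : ∀ r, 0 < r → r ≤ 1 → ν {x | f x ≤ r} ≤ C * ENNReal.ofReal (r ^ s)) :
    ∫⁻ x, ENNReal.ofReal (f x ^ (-β)) ∂ν ≤ ν univ + C * ENNReal.ofReal (β / (s - β)) := by
  rcases hβ.eq_or_lt with rfl | hβ
  · simp
  have hexp : -(s / β) < -1 := neg_lt_neg ((one_lt_div hβ).2 hβs)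
  have hvalue : -1 ^ (-(s / β) + 1) / (-(s / β) + 1) = β / (s - β) := by
    rw [one_rpow, show -(s / β) + 1 = -((s - β) / β) by field_simp; ring, neg_div_neg_eq,
      one_div_div]
  have hsmall : ∫⁻ t in Ioc (0 : ℝ) 1, ν {x | t < f x ^ (-β)} ≤ ν univ :=
    calc ∫⁻ t in Ioc (0 : ℝ) 1, ν {x | t < f x ^ (-β)}
        ≤ ∫⁻ _ in Ioc (0 : ℝ) 1, ν univ := lintegral_mono fun _ ↦ measure_mono (subset_univ _)
      _ = ν univ := by simp
  have hlarge : ∫⁻ t in Ioi (1 : ℝ), ν {x | t < f x ^ (-β)} ≤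
      C * ENNReal.ofReal (β / (s - β)) :=
    calc ∫⁻ t in Ioi (1 : ℝ), ν {x | t < f x ^ (-β)}
        ≤ ∫⁻ t in Ioi (1 : ℝ), C * ENNReal.ofReal (t ^ (-(s / β))) :=
          setLIntegral_mono' measurableSet_Ioi fun _ ht ↦
            measure_lt_rpow_neg_le hf₀ hβ hν (le_of_lt ht)
      _ = C * ENNReal.ofReal (β / (s - β)) := by
          rw [lintegral_const_mul _ (by fun_prop), lintegral_Ioi_rpow_of_lt hexp one_pos, hvalue]
  calc ∫⁻ x, ENNReal.ofReal (f x ^ (-β)) ∂ν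
      = ∫⁻ t in Ioc 0 1 ∪ Ioi 1, ν {x | t < f x ^ (-β)} := by
        rw [Ioc_union_Ioi_eq_Ioi zero_le_one]
        exact lintegral_eq_lintegral_meas_lt ν (.of_forall fun x ↦ rpow_nonneg (hf₀ x) _)
          (hf.pow_const _).aemeasurable
    _ ≤ ν univ + C * ENNReal.ofReal (β / (s - β)) :=
        (lintegral_union_le _ _ _).trans (add_le_add hsmall hlarge)

end LayerCake

section Cap

variable {E : Type*} [NormedAddCommGroup E] [NormedSpace ℝ E]

open scoped Pointwise in
theorem Ioo_smul_closedBall_subset_iUnion_ball (ω : sphere (0 : E) 1) {r : ℝ} (hr : 0 < r) :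
    Ioo (0 : ℝ) 1 • ((↑) '' closedBall ω r : Set E) ⊆
      ⋃ k ∈ Finset.range (⌊1 / r⌋₊ + 1), ball ((k * r) • (ω : E)) (2 * r) := by
  rintro _ ⟨t, ⟨ht₀, ht₁⟩, _, ⟨ω', hω', rfl⟩, rfl⟩
  have hk₀ : ⌊t / r⌋₊ * r ≤ t := (le_div_iff₀ hr).1 (Nat.floor_le (by positivity))
  have hk₁ : t < (⌊t / r⌋₊ + 1) * r := (div_lt_iff₀ hr).1 (Nat.lt_floor_add_one _)
  have hcap : ‖(ω' : E) - ω‖ ≤ r := by simpa [Subtype.dist_eq, dist_eq_norm] using hω'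
  simp only [mem_iUnion, Finset.mem_range, mem_ball, exists_prop]
  refine ⟨⌊t / r⌋₊, Nat.lt_succ_of_le (Nat.floor_le_floor (by gcongr)), ?_⟩
  calc dist (t • (ω' : E)) ((⌊t / r⌋₊ * r) • (ω : E))
      = ‖t • ((ω' : E) - ω) + (t - ⌊t / r⌋₊ * r) • (ω : E)‖ := by
        rw [dist_eq_norm]
        congr 1
        module
    _ ≤ t * ‖(ω' : E) - ω‖ + (t - ⌊t / r⌋₊ * r) := by
        refine (norm_add_le _ _).trans_eq ?_
        rw [norm_smul_of_nonneg ht₀.le, norm_smul_of_nonneg (sub_nonneg.2 hk₀),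
          norm_eq_of_mem_sphere, mul_one]
    _ < 2 * r := by nlinarith [norm_nonneg ((ω' : E) - ω)]

theorem max_mul_norm_sub_le {a b : ℝ} (ha : 0 ≤ a) (hb : 0 ≤ b) {u v : E} (hu : ‖u‖ = 1)
    (hv : ‖v‖ = 1) : max a b * ‖u - v‖ ≤ 2 * ‖a • u - b • v‖ := by
  wlog hba : b ≤ a generalizing a b u v
  · rw [max_comm, norm_sub_rev u, norm_sub_rev (a • u)]
    exact this hb ha hv hu (le_of_not_ge hba)
  have hdiff : a - b ≤ ‖a • u - b • v‖ := by
    simpa [norm_smul_of_nonneg, ha, hb, hu, hv] using norm_sub_norm_le (a • u) (b • v)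
  calc max a b * ‖u - v‖ = ‖(a • u - b • v) - (a - b) • v‖ := by
        rw [max_eq_left hba, ← norm_smul_of_nonneg ha]
        congr 1
        module
    _ ≤ ‖a • u - b • v‖ + (a - b) := by
        simpa [norm_smul_of_nonneg, hba, hv] using norm_sub_le (a • u - b • v) ((a - b) • v)
    _ ≤ 2 * ‖a • u - b • v‖ := by linarith

variable [FiniteDimensional ℝ E] [MeasurableSpace E] [BorelSpace E]
  (μ : Measure E) [μ.IsAddHaarMeasure]

local notation "dim" => Module.finrank ℝ E

theorem toSphere_closedBall_le (ω : sphere (0 : E) 1) {r : ℝ} (hr₀ : 0 < r) (hr₁ : r ≤ 1) :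
    μ.toSphere (closedBall ω r) ≤
      ENNReal.ofReal (2 ^ (dim + 1)) * μ.toSphere univ * ENNReal.ofReal (r ^ ((dim : ℝ) - 1)) := by
  have hcard : ((⌊1 / r⌋₊ + 1 : ℕ) : ℝ) ≤ 2 / r := by
    have hfloor : (⌊1 / r⌋₊ : ℝ) ≤ 1 / r := Nat.floor_le (by positivity)
    have hone : 1 ≤ 1 / r := (one_le_div hr₀).2 hr₁
    push_cast
    linarith [show 2 / r = 1 / r + 1 / r by ring]
  have hcount : ((⌊1 / r⌋₊ + 1 : ℕ) : ℝ≥0∞) ≤ ENNReal.ofReal (2 / r) := by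
    rw [← ENNReal.ofReal_natCast]
    exact ENNReal.ofReal_le_ofReal hcard
  have hscale : 2 / r * (2 * r) ^ dim = 2 ^ (dim + 1) * r ^ ((dim : ℝ) - 1) := by
    rw [rpow_sub_one hr₀.ne', rpow_natCast, mul_pow]
    ring
  calc μ.toSphere (closedBall ω r)
      ≤ dim * ∑ k ∈ Finset.range (⌊1 / r⌋₊ + 1), μ (ball ((k * r) • (ω : E)) (2 * r)) := by
        rw [μ.toSphere_apply' measurableSet_closedBall]
        gcongr
        exact (measure_mono (Ioo_smul_closedBall_subset_iUnion_ball ω hr₀)).trans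
          (measure_biUnion_finset_le _ _)
    _ = dim * ((⌊1 / r⌋₊ + 1 : ℕ) * (ENNReal.ofReal ((2 * r) ^ dim) * μ (ball 0 1))) := by
        simp only [μ.addHaar_ball_of_pos _ (show 0 < 2 * r by positivity), Finset.sum_const,
          Finset.card_range, nsmul_eq_mul]
    _ ≤ dim * (ENNReal.ofReal (2 / r) * (ENNReal.ofReal ((2 * r) ^ dim) * μ (ball 0 1))) := by
        gcongr
    _ = _ := by
        rw [← mul_assoc (ENNReal.ofReal _), ← ENNReal.ofReal_mul (by positivity), hscale,
          ENNReal.ofReal_mul (by positivity), μ.toSphere_apply_univ]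
        ring

theorem lintegral_rpow_neg_toSphere_le {f : sphere (0 : E) 1 → ℝ} {β : ℝ} (hf : Measurable f)
    (ω : sphere (0 : E) 1) (hdist : ∀ ω', dist ω' ω ≤ f ω') (hβ₀ : 0 ≤ β) (hβ₁ : β < dim - 1) :
    ∫⁻ ω', ENNReal.ofReal (f ω' ^ (-β)) ∂μ.toSphere ≤
      ENNReal.ofReal (2 ^ (dim + 1) * dim / (dim - 1 - β)) * μ.toSphere univ := by
  have hgap : 0 < (dim : ℝ) - 1 - β := sub_pos.2 hβ₁
  have hcap (r : ℝ) (hr₀ : 0 < r) (hr₁ : r ≤ 1) : μ.toSphere {ω' | f ω' ≤ r} ≤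
      ENNReal.ofReal (2 ^ (dim + 1)) * μ.toSphere univ * ENNReal.ofReal (r ^ ((dim : ℝ) - 1)) :=
    (measure_mono fun ω' hω' ↦ (hdist ω').trans hω').trans (toSphere_closedBall_le μ ω hr₀ hr₁)
  have hconst : 1 + 2 ^ (dim + 1) * (β / (dim - 1 - β)) ≤
      2 ^ (dim + 1) * dim / (dim - 1 - β) := by
    have hpow : (1 : ℝ) ≤ 2 ^ (dim + 1) := one_le_pow₀ one_le_two
    rw [← mul_div_assoc, ← sub_nonneg, one_add_div hgap.ne', ← sub_div]
    refine div_nonneg ?_ hgap.le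
    nlinarith
  calc ∫⁻ ω', ENNReal.ofReal (f ω' ^ (-β)) ∂μ.toSphere
      ≤ μ.toSphere univ + ENNReal.ofReal (2 ^ (dim + 1)) * μ.toSphere univ *
          ENNReal.ofReal (β / (dim - 1 - β)) :=
        lintegral_rpow_neg_le hf (fun ω' ↦ dist_nonneg.trans (hdist ω')) hβ₀ hβ₁ hcap
    _ = ENNReal.ofReal (1 + 2 ^ (dim + 1) * (β / (dim - 1 - β))) * μ.toSphere univ := by
        rw [ENNReal.ofReal_add zero_le_one (by positivity), ENNReal.ofReal_mul (by positivity),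
          ENNReal.ofReal_one]
        ring
    _ ≤ _ := by gcongr

theorem lintegral_rpow_neg_norm_smul_sub_smul_le (ω : sphere (0 : E) 1) {a b β : ℝ} (ha : 0 ≤ a)
    (hb : 0 ≤ b) (hab : 0 < max a b) (hβ₀ : 0 ≤ β) (hβ₁ : β < dim - 1) :
    ∫⁻ ω' : sphere (0 : E) 1, ENNReal.ofReal (‖a • (ω : E) - b • (ω' : E)‖ ^ (-β)) ∂μ.toSphere ≤
      ENNReal.ofReal ((max a b / 2) ^ (-β)) *
        (ENNReal.ofReal (2 ^ (dim + 1) * dim / (dim - 1 - β)) * μ.toSphere univ) := by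
  set f : sphere (0 : E) 1 → ℝ := fun ω' ↦ ‖a • (ω : E) - b • (ω' : E)‖ / (max a b / 2)
  have hf : Measurable f := Continuous.measurable (by fun_prop)
  have hdist (ω' : sphere (0 : E) 1) : dist ω' ω ≤ f ω' := by
    have := max_mul_norm_sub_le ha hb (norm_eq_of_mem_sphere ω) (norm_eq_of_mem_sphere ω')
    rw [dist_comm, Subtype.dist_eq, dist_eq_norm, le_div_iff₀ (by positivity)]
    linarith
  have hrescale (ω' : sphere (0 : E) 1) :
      ENNReal.ofReal (‖a • (ω : E) - b • (ω' : E)‖ ^ (-β)) =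
        ENNReal.ofReal ((max a b / 2) ^ (-β)) * ENNReal.ofReal (f ω' ^ (-β)) := by
    rw [← ENNReal.ofReal_mul (by positivity), ← mul_rpow (by positivity) (by positivity),
      mul_div_cancel₀ _ (by positivity)]
  simp_rw [hrescale]
  rw [lintegral_const_mul _ (by fun_prop)]
  gcongr
  exact lintegral_rpow_neg_toSphere_le μ hf ω hdist hβ₀ hβ₁

end Cap

section Kernel

theorem ofReal_div_ofReal_rpow_le {N K D p : ℝ} (hD : 0 ≤ D) (hN : N ≤ K * D ^ 2) :
    ENNReal.ofReal N / ENNReal.ofReal (D ^ p) ≤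
      ENNReal.ofReal K * ENNReal.ofReal (D ^ (2 - p)) := by
  rcases hD.eq_or_lt with rfl | hD
  · have hN₀ : N ≤ 0 := by simpa using hN
    simp [ENNReal.ofReal_of_nonpos hN₀]
  rw [← ENNReal.ofReal_div_of_pos (by positivity), ← ENNReal.ofReal_mul' (by positivity)]
  gcongr
  rw [rpow_sub hD, rpow_two, ← mul_div_assoc]
  gcongr

theorem two_mul_mul_sqrt_div_two_rpow_neg_le {m β : ℝ} {n : ℕ} (hm : 0 < m) (hβ : β / 2 ≤ n) :
    2 * m * (√(2 * m) / 2) ^ (-β) ≤ 2 ^ (n + 1) * m ^ (1 - β / 2) := by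
  have hhalf : √(2 * m) / 2 = (m / 2) ^ (1 / 2 : ℝ) := by
    rw [← sqrt_eq_rpow, eq_comm, sqrt_eq_iff_mul_self_eq (by positivity) (by positivity),
      div_mul_div_comm, mul_self_sqrt (by positivity)]
    ring
  calc 2 * m * (√(2 * m) / 2) ^ (-β)
      = 2 ^ (1 + β / 2) * m ^ (1 - β / 2) := by
        rw [hhalf, ← rpow_mul (by positivity), div_rpow hm.le zero_le_two, rpow_add two_pos,
          sub_eq_add_neg, rpow_add hm, rpow_one, rpow_one,
          show 1 / 2 * -β = -(β / 2) by ring, rpow_neg zero_le_two]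
        field_simp
    _ ≤ 2 ^ ((n : ℝ) + 1) * m ^ (1 - β / 2) := by
        gcongr ?_ * _
        exact rpow_le_rpow_of_exponent_le one_le_two (by rwa [add_comm, add_le_add_iff_right])
    _ = 2 ^ (n + 1) * m ^ (1 - β / 2) := by norm_cast

variable {E : Type*} [NormedAddCommGroup E] [InnerProductSpace ℝ E]

theorem norm_smul_sub_smul_sq {u v : E} (hu : ‖u‖ = 1) (hv : ‖v‖ = 1) (a b : ℝ) :
    ‖a • u - b • v‖ ^ 2 = (a - b) ^ 2 + 2 * (a * b) * (1 - ⟪u, v⟫) := by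
  rw [norm_sub_sq_real, norm_smul, norm_smul, hu, hv, real_inner_smul_left, real_inner_smul_right,
    mul_one, mul_one, norm_eq_abs, norm_eq_abs, sq_abs, sq_abs]
  ring

theorem sq_sub_sq_sq_add_mul_one_sub_inner_sq_le {a b : ℝ} (ha : 0 ≤ a) (hb : 0 ≤ b) {u v : E}
    (hu : ‖u‖ = 1) (hv : ‖v‖ = 1) :
    (a ^ 2 - b ^ 2) ^ 2 + a ^ 2 * b ^ 2 * (1 - ⟪u, v⟫ ^ 2) ≤
      4 * max a b ^ 2 * ‖a • u - b • v‖ ^ 2 := by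
  have hc : |⟪u, v⟫| ≤ 1 := by simpa [hu, hv] using abs_real_inner_le_norm u v
  obtain ⟨_, hc₁⟩ := abs_le.1 hc
  have hadd : a + b ≤ 2 * max a b := by linarith [le_max_left a b, le_max_right a b]
  have hmul : a * b ≤ max a b * max a b := by gcongr <;> simp
  have hcross : 0 ≤ a * b * (1 - ⟪u, v⟫) := mul_nonneg (mul_nonneg ha hb) (sub_nonneg.2 hc₁)
  calc (a ^ 2 - b ^ 2) ^ 2 + a ^ 2 * b ^ 2 * (1 - ⟪u, v⟫ ^ 2)
      = (a + b) ^ 2 * (a - b) ^ 2 + a * b * (1 + ⟪u, v⟫) * (a * b * (1 - ⟪u, v⟫)) := by ring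
    _ ≤ (2 * max a b) ^ 2 * (a - b) ^ 2 +
          max a b * max a b * 2 * (a * b * (1 - ⟪u, v⟫)) := by
        gcongr <;> linarith
    _ ≤ 4 * max a b ^ 2 * ((a - b) ^ 2 + 2 * (a * b) * (1 - ⟪u, v⟫)) := by
        nlinarith [mul_nonneg (sq_nonneg (max a b)) hcross]
    _ = 4 * max a b ^ 2 * ‖a • u - b • v‖ ^ 2 := by rw [norm_smul_sub_smul_sq hu hv]

theorem max_sqrt_two_mul (y z : ℝ) : max √(2 * y) √(2 * z) = √(2 * max y z) := by
  have hmono : Monotone fun x : ℝ ↦ √(2 * x) := fun _ _ h ↦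
    sqrt_le_sqrt (mul_le_mul_of_nonneg_left h zero_le_two)
  exact hmono.map_max.symm

theorem sq_sub_add_mul_one_sub_inner_sq_le {y z : ℝ} (hy : 0 ≤ y) (hz : 0 ≤ z) {u v : E}
    (hu : ‖u‖ = 1) (hv : ‖v‖ = 1) :
    (y - z) ^ 2 + y * z * (1 - ⟪u, v⟫ ^ 2) ≤
      2 * max y z * ‖√(2 * y) • u - √(2 * z) • v‖ ^ 2 := by
  have h := sq_sub_sq_sq_add_mul_one_sub_inner_sq_le (sqrt_nonneg (2 * y)) (sqrt_nonneg (2 * z))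
    hu hv
  rw [max_sqrt_two_mul, sq_sqrt (by positivity), sq_sqrt (by positivity),
    sq_sqrt (by positivity)] at h
  linarith

theorem kernel_le (α : ℝ) {y z : ℝ} (hy : 0 ≤ y) (hz : 0 ≤ z) {u v : E} (hu : ‖u‖ = 1)
    (hv : ‖v‖ = 1) :
    ENNReal.ofReal ((y - z) ^ 2 + y * z * (1 - ⟪u, v⟫ ^ 2)) /
        ENNReal.ofReal (‖√(2 * y) • u - √(2 * z) • v‖ ^ (3 + α)) ≤
      ENNReal.ofReal (2 * max y z) *
        ENNReal.ofReal (‖√(2 * y) • u - √(2 * z) • v‖ ^ (-(1 + α))) := by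
  rw [show -(1 + α) = 2 - (3 + α) by ring]
  exact ofReal_div_ofReal_rpow_le (norm_nonneg _) (sq_sub_add_mul_one_sub_inner_sq_le hy hz hu hv)

end Kernel

section General

variable {E : Type*} [NormedAddCommGroup E] [InnerProductSpace ℝ E] [FiniteDimensional ℝ E]
  [MeasurableSpace E] [BorelSpace E] (μ : Measure E) [μ.IsAddHaarMeasure]

local notation "dim" => Module.finrank ℝ E

theorem lintegral_kernel_le (ω : sphere (0 : E) 1) {α y z : ℝ} (hα₀ : -1 ≤ α)
    (hα₁ : α < dim - 2) (hy : 0 ≤ y) (hz : 0 ≤ z) :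
    ∫⁻ ω' : sphere (0 : E) 1,
        ENNReal.ofReal ((y - z) ^ 2 + y * z * (1 - ⟪(ω : E), (ω' : E)⟫ ^ 2)) /
          ENNReal.ofReal (‖√(2 * y) • (ω : E) - √(2 * z) • (ω' : E)‖ ^ (3 + α)) ∂μ.toSphere ≤
      ENNReal.ofReal (2 ^ (2 * dim + 2) * dim / (dim - 2 - α) * max y z ^ ((1 - α) / 2)) *
        μ.toSphere univ := by
  rcases (le_max_of_le_left hy : 0 ≤ max y z).eq_or_lt with hmax | hmax
  · obtain rfl : y = 0 := hy.antisymm' (hmax ▸ le_max_left y z)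
    obtain rfl : z = 0 := hz.antisymm' (hmax ▸ le_max_right 0 z)
    simp
  have hR : max √(2 * y) √(2 * z) = √(2 * max y z) := max_sqrt_two_mul y z
  have : 0 < (dim : ℝ) - 2 - α := sub_pos.2 hα₁
  calc _ ≤ ∫⁻ ω' : sphere (0 : E) 1, ENNReal.ofReal (2 * max y z) *
          ENNReal.ofReal (‖√(2 * y) • (ω : E) - √(2 * z) • (ω' : E)‖ ^ (-(1 + α))) ∂μ.toSphere :=
        lintegral_mono fun ω' ↦
          kernel_le α hy hz (norm_eq_of_mem_sphere ω) (norm_eq_of_mem_sphere ω')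
    _ ≤ ENNReal.ofReal (2 * max y z) * (ENNReal.ofReal ((√(2 * max y z) / 2) ^ (-(1 + α))) *
          (ENNReal.ofReal (2 ^ (dim + 1) * dim / (dim - 1 - (1 + α))) * μ.toSphere univ)) := by
        rw [lintegral_const_mul _ (by fun_prop), ← hR]
        gcongr
        exact lintegral_rpow_neg_norm_smul_sub_smul_le μ ω (sqrt_nonneg _) (sqrt_nonneg _)
          (hR ▸ by positivity) (by linarith) (by linarith)
    _ = ENNReal.ofReal (2 * max y z * (√(2 * max y z) / 2) ^ (-(1 + α)) *
          (2 ^ (dim + 1) * dim / (dim - 2 - α))) * μ.toSphere univ := by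
        rw [show (dim : ℝ) - 1 - (1 + α) = dim - 2 - α by ring, mul_assoc (2 * max y z),
          ENNReal.ofReal_mul (p := 2 * max y z) (by positivity),
          ENNReal.ofReal_mul (p := (√(2 * max y z) / 2) ^ (-(1 + α))) (by positivity)]
        ring
    _ ≤ ENNReal.ofReal (2 ^ (dim + 1) * max y z ^ (1 - (1 + α) / 2) *
          (2 ^ (dim + 1) * dim / (dim - 2 - α))) * μ.toSphere univ := by
        gcongr ENNReal.ofReal (?_ * _) * _
        exact two_mul_mul_sqrt_div_two_rpow_neg_le hmax (by linarith)
    _ = _ := by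
        rw [show 1 - (1 + α) / 2 = (1 - α) / 2 by ring]
        ring_nf

theorem lintegral_lintegral_kernel_le {α y z : ℝ} (hα₀ : -1 ≤ α) (hα₁ : α < dim - 2) (hy : 0 ≤ y)
    (hz : 0 ≤ z) :
    ∫⁻ ω : sphere (0 : E) 1, ∫⁻ ω' : sphere (0 : E) 1,
        ENNReal.ofReal ((y - z) ^ 2 + y * z * (1 - ⟪(ω : E), (ω' : E)⟫ ^ 2)) /
          ENNReal.ofReal (‖√(2 * y) • (ω : E) - √(2 * z) • (ω' : E)‖ ^ (3 + α))
        ∂μ.toSphere ∂μ.toSphere ≤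
      ENNReal.ofReal (2 ^ (2 * dim + 2) * dim * μ.toSphere.real univ ^ 2 / (dim - 2 - α) *
        max y z ^ ((1 - α) / 2)) := by
  have : 0 < (dim : ℝ) - 2 - α := sub_pos.2 hα₁
  have hmass : μ.toSphere univ = ENNReal.ofReal (μ.toSphere.real univ) := (ofReal_measureReal).symm
  refine (lintegral_mono fun ω ↦ lintegral_kernel_le μ ω hα₀ hα₁ hy hz).trans_eq ?_
  rw [lintegral_const, hmass, ← ENNReal.ofReal_mul (by positivity),
    ← ENNReal.ofReal_mul (by positivity)]
  ring_nf

theorem stmt7_general [Nontrivial E] : ∃ C₀ : ℝ, 0 < C₀ ∧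
    ∀ α : ℝ, -1 ≤ α → α ≤ 1 → α < dim - 2 → ∀ y z : ℝ, 0 ≤ y → 0 ≤ z →
      ∫⁻ ω : sphere (0 : E) 1, ∫⁻ ω' : sphere (0 : E) 1,
          ENNReal.ofReal ((y - z) ^ 2 + y * z * (1 - ⟪(ω : E), (ω' : E)⟫ ^ 2)) /
            ENNReal.ofReal (‖√(2 * y) • (ω : E) - √(2 * z) • (ω' : E)‖ ^ (3 + α))
          ∂μ.toSphere ∂μ.toSphere ≤
        ENNReal.ofReal (C₀ / (dim - 2 - α) * (y ^ ((1 - α) / 2) + z ^ ((1 - α) / 2))) := by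
  have hdim : 0 < dim := Module.finrank_pos
  have : NeZero μ.toSphere := ⟨μ.toSphere_ne_zero⟩
  have hmass : 0 < μ.toSphere.real univ := measureReal_univ_pos
  refine ⟨2 ^ (2 * dim + 2) * dim * μ.toSphere.real univ ^ 2, by positivity,
    fun α hα₀ hα₁ hαd y z hy hz ↦ (lintegral_lintegral_kernel_le μ hα₀ hαd hy hz).trans ?_⟩
  have : 0 < (dim : ℝ) - 2 - α := sub_pos.2 hαd
  rw [rpow_max hy hz (by linarith)]
  gcongr
  exact max_le_add_of_nonneg (rpow_nonneg hy _) (rpow_nonneg hz _)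

end General

/-- There is an absolute constant `C₀ > 0` such that for all `0 ≤ α < 1`
and `y, z ≥ 0`,
`∫_{S²×S²} [(y−z)² + yz(1−(ω·ω_*)²)] / |√(2y)ω − √(2z)ω_*|^{3+α} dω dω_*
  ≤ (C₀/(1−α)) (y^{(1−α)/2} + z^{(1−α)/2})`. -/
theorem stmt7 : ∃ C₀ : ℝ, 0 < C₀ ∧
    ∀ α : ℝ, 0 ≤ α → α < 1 → ∀ y z : ℝ, 0 ≤ y → 0 ≤ z →
      (∫⁻ ω : Metric.sphere (0 : E3) 1, ∫⁻ ω' : Metric.sphere (0 : E3) 1,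
          ENNReal.ofReal ((y - z) ^ 2 + y * z * (1 - (⟪(ω : E3), (ω' : E3)⟫) ^ 2)) /
            ENNReal.ofReal
              (‖Real.sqrt (2 * y) • (ω : E3) - Real.sqrt (2 * z) • (ω' : E3)‖ ^ ((3 : ℝ) + α))
        ∂sphM ∂sphM) ≤
      ENNReal.ofReal ((C₀ / (1 - α)) * (y ^ ((1 - α) / 2) + z ^ ((1 - α) / 2))) := by
  obtain ⟨C₀, hC₀, hbound⟩ := stmt7_general (volume : Measure E3)
  simp only [show (Module.finrank ℝ E3 : ℝ) - 2 = 1 by norm_num] at hbound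
  exact ⟨C₀, hC₀, fun α hα₀ hα₁ ↦ hbound α (by linarith) hα₁.le hα₁⟩

end
end

section
/- There is an absolute constant C₀ ∈ (0, ∞) such that for all α with 0 ≤ α < 1 and all y, z ≥ 0: ∫_{S²×S²} [ (y−z)² + yz(1 − (ω·ω_*)²) ] / ( |√(2y)ω − √(2z)ω_*|³ · min(|√(2y)ω − √(2z)ω_*|^α, 1) ) dω dω_* ≤ (C₀/(1−α)) ( y^{1/2} + y^{(1−α)/2} + z^{1/2} + z^{(1−α)/2} ). -/
/-!
Write `n` for the dimension of the ambient space, `a = √(2y)`, `b = √(2z)`, `r = |aω - bω_*|` and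
`m = (a + b) / 2`. The identity `r² = (a - b)² + ab |ω - ω_*|²` gives two things: the numerator is
at most `m² r²`, so that the integrand is at most `m² (r⁻¹ + r⁻⁽¹⁺ᵅ⁾)`; and `m |ω - ω_*| ≤ r`, so
that `{ω_* | r < m τ}` lies in the spherical cap of radius `τ` about `ω`. Such a cap has measure
`O(τⁿ⁻¹)`, because the part of the cone over it in the shell `1 - τ ≤ |x| < 1` lies in a ball of
radius `2τ`. By the layer-cake formula the integral of `(r / m)⁻ᵖ` in `ω_*` is then
`O(1 / (n - 1 - p))` for `0 < p < n - 1`, and one takes `p = 1` and `p = 1 + α`.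
-/

open MeasureTheory Real
open scoped RealInnerProductSpace ENNReal

noncomputable section

section NegativeMoments

lemma lintegral_Ioi_one_rpow_neg {q : ℝ} (hq : 1 < q) :
    ∫⁻ t in Set.Ioi (1 : ℝ), ENNReal.ofReal (t ^ (-q)) = ENNReal.ofReal (1 / (q - 1)) := by
  have hq' : -q < -1 := neg_lt_neg hq
  rw [← ofReal_integral_eq_lintegral_ofReal (integrableOn_Ioi_rpow_of_lt hq' one_pos),
    integral_Ioi_rpow_of_lt hq' one_pos, one_rpow, neg_add_eq_sub, ← neg_sub q 1, neg_div_neg_eq]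
  filter_upwards [ae_restrict_mem measurableSet_Ioi] with t ht
  exact rpow_nonneg (one_pos.trans ht).le _

lemma lt_rpow_inv_of_lt_rpow_of_neg {x t q : ℝ} (ht : 0 < t) (hq : q < 0) (h : t < x ^ q) :
    x < t ^ q⁻¹ := by
  by_contra! hx
  exact hx.not_gt
    ((lt_rpow_inv_iff_of_neg ((rpow_pos_of_pos ht _).trans_le hx) ht hq).2 h)

variable {Ω : Type*} [MeasurableSpace Ω] {μ : Measure Ω} {f : Ω → ℝ} {C : ℝ≥0∞} {p s : ℝ}

lemma measure_lt_rpow_neg_le_of_measure_lt_le (hp : 0 < p)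
    (hC : ∀ τ : ℝ, 0 < τ → τ ≤ 1 → μ {x | f x < τ} ≤ C * ENNReal.ofReal (τ ^ s)) {t : ℝ}
    (ht : 1 < t) :
    μ {x | t < f x ^ (-p)} ≤ C * ENNReal.ofReal (t ^ (-(s / p))) := by
  have ht0 : 0 < t := one_pos.trans ht
  calc μ {x | t < f x ^ (-p)} ≤ μ {x | f x < t ^ (-p)⁻¹} :=
        measure_mono fun x ↦ lt_rpow_inv_of_lt_rpow_of_neg ht0 (neg_lt_zero.2 hp)
    _ ≤ C * ENNReal.ofReal ((t ^ (-p)⁻¹) ^ s) :=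
        hC _ (rpow_pos_of_pos ht0 _)
          (rpow_le_one_of_one_le_of_nonpos ht.le (inv_nonpos.2 (neg_lt_zero.2 hp).le))
    _ = C * ENNReal.ofReal (t ^ (-(s / p))) := by
        rw [← rpow_mul ht0.le, inv_neg, neg_mul, inv_mul_eq_div]

lemma lintegral_rpow_neg_le_of_measure_lt_le (hf : AEMeasurable f μ) (hf0 : 0 ≤ᵐ[μ] f)
    (hp : 0 < p) (hps : p < s)
    (hC : ∀ τ : ℝ, 0 < τ → τ ≤ 1 → μ {x | f x < τ} ≤ C * ENNReal.ofReal (τ ^ s)) :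
    ∫⁻ x, ENNReal.ofReal (f x ^ (-p)) ∂μ ≤ μ Set.univ + C * ENNReal.ofReal (p / (s - p)) := by
  have hnonneg : 0 ≤ᵐ[μ] fun x ↦ f x ^ (-p) := hf0.mono fun x hx ↦ rpow_nonneg hx _
  have hlow : ∫⁻ t in Set.Ioc (0 : ℝ) 1, μ {x | t < f x ^ (-p)} ≤ μ Set.univ :=
    calc ∫⁻ t in Set.Ioc (0 : ℝ) 1, μ {x | t < f x ^ (-p)}
        ≤ ∫⁻ _ in Set.Ioc (0 : ℝ) 1, μ Set.univ :=
          lintegral_mono fun _ ↦ measure_mono (Set.subset_univ _)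
      _ = μ Set.univ := by simp
  have hhigh : ∫⁻ t in Set.Ioi (1 : ℝ), μ {x | t < f x ^ (-p)} ≤
      C * ENNReal.ofReal (p / (s - p)) :=
    calc ∫⁻ t in Set.Ioi (1 : ℝ), μ {x | t < f x ^ (-p)}
        ≤ ∫⁻ t in Set.Ioi (1 : ℝ), C * ENNReal.ofReal (t ^ (-(s / p))) :=
          setLIntegral_mono' measurableSet_Ioi fun _ ht ↦
            measure_lt_rpow_neg_le_of_measure_lt_le hp hC ht
      _ = C * ENNReal.ofReal (1 / (s / p - 1)) := by
          rw [lintegral_const_mul _ (by fun_prop),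
            lintegral_Ioi_one_rpow_neg ((one_lt_div hp).2 hps)]
      _ = C * ENNReal.ofReal (p / (s - p)) := by
          rw [div_sub_one hp.ne', one_div_div]
  rw [lintegral_eq_lintegral_meas_lt μ hnonneg (hf.pow_const _),
    ← Set.Ioc_union_Ioi_eq_Ioi zero_le_one,
    lintegral_union measurableSet_Ioi (Set.Ioc_disjoint_Ioi le_rfl)]
  exact add_le_add hlow hhigh

end NegativeMoments

section SphericalCaps

open Metric Module
open scoped Pointwise

variable {E : Type*} [NormedAddCommGroup E] [NormedSpace ℝ E]

lemma Ioo_smul_sphere_ball_subset (ω : sphere (0 : E) 1) (ρ : ℝ) :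
    Set.Ioo (0 : ℝ) 1 • ((↑) '' ball ω ρ : Set E) ⊆
      ball (ω : E) (2 * ρ) ∪ (1 - ρ) • (Set.Ioo (0 : ℝ) 1 • ((↑) '' ball ω ρ : Set E)) := by
  rintro _ ⟨s, ⟨hs0, hs1⟩, _, ⟨ω', hω', rfl⟩, rfl⟩
  rcases lt_or_ge s (1 - ρ) with hs | hs
  · have hρ' : 0 < 1 - ρ := hs0.trans hs
    refine Or.inr ⟨(s / (1 - ρ)) • (ω' : E), Set.smul_mem_smul
      ⟨div_pos hs0 hρ', (div_lt_one hρ').2 hs⟩ (Set.mem_image_of_mem _ hω'), ?_⟩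
    simp only [smul_smul, mul_div_cancel₀ s hρ'.ne']
  · left
    have hdist : ‖(ω' : E) - ω‖ < ρ := by
      rwa [mem_ball, Subtype.dist_eq, dist_eq_norm] at hω'
    rw [mem_ball, dist_eq_norm]
    calc ‖s • (ω' : E) - ω‖ = ‖s • ((ω' : E) - ω) - (1 - s) • (ω : E)‖ := by
          congr 1; module
      _ ≤ ‖s • ((ω' : E) - ω)‖ + ‖(1 - s) • (ω : E)‖ := norm_sub_le _ _
      _ = s * ‖(ω' : E) - ω‖ + (1 - s) := by
          rw [norm_smul, norm_smul, norm_eq_of_mem_sphere, norm_of_nonneg hs0.le,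
            norm_of_nonneg (sub_nonneg.2 hs1.le), mul_one]
      _ < 2 * ρ := by nlinarith [norm_nonneg ((ω' : E) - ω)]

variable [MeasurableSpace E] [BorelSpace E] [FiniteDimensional ℝ E]
  (μ : Measure E) [μ.IsAddHaarMeasure]

lemma ofReal_mul_addHaar_Ioo_smul_sphere_ball_le (ω : sphere (0 : E) 1) {ρ : ℝ} (hρ0 : 0 < ρ)
    (hρ1 : ρ ≤ 1) :
    ENNReal.ofReal ρ * μ (Set.Ioo (0 : ℝ) 1 • ((↑) '' ball ω ρ : Set E)) ≤
      ENNReal.ofReal ((2 * ρ) ^ finrank ℝ E) * μ (ball 0 1) := by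
  set V := μ (Set.Ioo (0 : ℝ) 1 • ((↑) '' ball ω ρ : Set E))
  have : Nontrivial E := ⟨ω, 0, ne_zero_of_mem_unit_sphere ω⟩
  have hVtop : V ≠ ∞ := by
    refine (measure_lt_top_of_subset ?_ (measure_ball_lt_top (μ := μ) (x := 0) (r := 1)).ne).ne
    rintro _ ⟨s, ⟨hs0, hs1⟩, _, ⟨ω', -, rfl⟩, rfl⟩
    simpa [norm_smul, abs_of_pos hs0] using hs1
  have hpow : (1 - ρ) ^ finrank ℝ E ≤ 1 - ρ :=
    pow_le_of_le_one (sub_nonneg.2 hρ1) (by linarith) finrank_pos.ne'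
  have hsplit : ENNReal.ofReal ρ * V + ENNReal.ofReal (1 - ρ) * V ≤
      μ (ball (ω : E) (2 * ρ)) + ENNReal.ofReal (1 - ρ) * V :=
    calc ENNReal.ofReal ρ * V + ENNReal.ofReal (1 - ρ) * V = V := by
          rw [← add_mul, ← ENNReal.ofReal_add hρ0.le (sub_nonneg.2 hρ1), add_sub_cancel,
            ENNReal.ofReal_one, one_mul]
      _ ≤ μ (ball (ω : E) (2 * ρ)) +
            μ ((1 - ρ) • (Set.Ioo (0 : ℝ) 1 • ((↑) '' ball ω ρ : Set E))) :=
          (measure_mono (Ioo_smul_sphere_ball_subset ω ρ)).trans (measure_union_le _ _)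
      _ ≤ μ (ball (ω : E) (2 * ρ)) + ENNReal.ofReal (1 - ρ) * V := by
          rw [Measure.addHaar_smul, abs_of_nonneg (pow_nonneg (sub_nonneg.2 hρ1) _)]
          gcongr
  rw [← Measure.addHaar_ball μ (ω : E) (by positivity)]
  exact ENNReal.le_of_add_le_add_right (ENNReal.mul_ne_top ENNReal.ofReal_ne_top hVtop) hsplit

lemma toSphere_ball_le (ω : sphere (0 : E) 1) {ρ : ℝ} (hρ0 : 0 < ρ) (hρ1 : ρ ≤ 1) :
    μ.toSphere (ball ω ρ) ≤
      2 ^ finrank ℝ E * μ.toSphere Set.univ * ENNReal.ofReal (ρ ^ (finrank ℝ E - 1 : ℝ)) := by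
  have hρ : ENNReal.ofReal ρ ≠ 0 := (ENNReal.ofReal_pos.2 hρ0).ne'
  have hpow : (2 * ρ) ^ finrank ℝ E =
      ρ * (2 ^ finrank ℝ E * ρ ^ (finrank ℝ E - 1 : ℝ)) := by
    rw [rpow_sub_one hρ0.ne', rpow_natCast, mul_pow]
    field_simp
  rw [← ENNReal.mul_le_mul_iff_right hρ ENNReal.ofReal_ne_top,
    μ.toSphere_apply' isOpen_ball.measurableSet, μ.toSphere_apply_univ]
  calc ENNReal.ofReal ρ * (finrank ℝ E * μ (Set.Ioo (0 : ℝ) 1 • ((↑) '' ball ω ρ : Set E)))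
      = finrank ℝ E *
          (ENNReal.ofReal ρ * μ (Set.Ioo (0 : ℝ) 1 • ((↑) '' ball ω ρ : Set E))) := by ring
    _ ≤ finrank ℝ E * (ENNReal.ofReal ((2 * ρ) ^ finrank ℝ E) * μ (ball 0 1)) :=
        mul_le_mul_right (ofReal_mul_addHaar_Ioo_smul_sphere_ball_le μ ω hρ0 hρ1) _
    _ = _ := by
        rw [hpow, ENNReal.ofReal_mul hρ0.le, ENNReal.ofReal_mul (by positivity),
          ENNReal.ofReal_pow zero_le_two, ENNReal.ofReal_ofNat]
        ring

end SphericalCaps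

section UnitVectors

variable {E : Type*} [NormedAddCommGroup E] [InnerProductSpace ℝ E] {u v : E}

lemma norm_smul_sub_smul_sq_of_norm_eq_one (hu : ‖u‖ = 1) (hv : ‖v‖ = 1) (a b : ℝ) :
    ‖a • u - b • v‖ ^ 2 = (a - b) ^ 2 + a * b * ‖u - v‖ ^ 2 := by
  rw [norm_sub_sq_real, norm_sub_sq_real, norm_smul, norm_smul, real_inner_smul_left,
    real_inner_smul_right, hu, hv, mul_one, mul_one, norm_eq_abs, norm_eq_abs, sq_abs, sq_abs]
  ring

lemma half_add_mul_norm_sub_le_norm_smul_sub_smul (hu : ‖u‖ = 1) (hv : ‖v‖ = 1) (a b : ℝ) :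
    (a + b) / 2 * ‖u - v‖ ≤ ‖a • u - b • v‖ := by
  have hd : ‖u - v‖ ≤ 2 := (norm_sub_le u v).trans_eq (by rw [hu, hv]; norm_num)
  have hd2 : ‖u - v‖ ^ 2 ≤ 2 ^ 2 := by gcongr
  refine le_of_sq_le_sq ?_ (norm_nonneg _)
  rw [norm_smul_sub_smul_sq_of_norm_eq_one hu hv]
  nlinarith [mul_nonneg (sq_nonneg (a - b)) (sub_nonneg.2 hd2)]

lemma sub_sq_add_mul_one_sub_inner_sq_le (hu : ‖u‖ = 1) (hv : ‖v‖ = 1) {y z : ℝ} (hy : 0 ≤ y)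
    (hz : 0 ≤ z) :
    (y - z) ^ 2 + y * z * (1 - ⟪u, v⟫ ^ 2) ≤
      ((√(2 * y) + √(2 * z)) / 2) ^ 2 * ‖√(2 * y) • u - √(2 * z) • v‖ ^ 2 := by
  have hinner : ‖u - v‖ ^ 2 = 2 * (1 - ⟪u, v⟫) := by
    rw [norm_sub_sq_real, hu, hv]; ring
  have hinner_le : |⟪u, v⟫| ≤ 1 := by simpa [hu, hv] using abs_real_inner_le_norm u v
  obtain ⟨hlow, hup⟩ := abs_le.1 hinner_le
  rw [norm_smul_sub_smul_sq_of_norm_eq_one hu hv, hinner]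
  have ha := sqrt_nonneg (2 * y)
  have hb := sqrt_nonneg (2 * z)
  have hay : y = √(2 * y) ^ 2 / 2 := by rw [sq_sqrt (by positivity)]; ring
  have hbz : z = √(2 * z) ^ 2 / 2 := by rw [sq_sqrt (by positivity)]; ring
  set a := √(2 * y)
  set b := √(2 * z)
  have hab : 0 ≤ a * b := mul_nonneg ha hb
  have hdiff : 0 ≤ a * b * (1 - ⟪u, v⟫) * (2 * (a + b) ^ 2 - a * b * (1 + ⟪u, v⟫)) := by
    refine mul_nonneg (mul_nonneg hab (sub_nonneg.2 hup)) ?_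
    nlinarith [sq_nonneg a, sq_nonneg b]
  rw [hay, hbz]
  linear_combination hdiff / 4

end UnitVectors

section Scalar

lemma rpow_add_le_add_rpow_of_le_one {a b s : ℝ} (ha : 0 ≤ a) (hb : 0 ≤ b) (hs : s ≤ 1) :
    (a + b) ^ s ≤ a ^ s + b ^ s := by
  rcases le_or_gt 0 s with hs0 | hs0
  · exact Real.rpow_add_le_add_rpow ha hb hs0 hs
  rcases ha.eq_or_lt with rfl | ha'
  · simpa using rpow_nonneg le_rfl s
  · exact (rpow_le_rpow_of_nonpos ha' (le_add_of_nonneg_right hb) hs0.le).trans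
      (le_add_of_nonneg_right (rpow_nonneg hb s))

lemma half_sqrt_two_mul_add_rpow_le {y z s k : ℝ} (hy : 0 ≤ y) (hz : 0 ≤ z) (hs : s ≤ 1)
    (hk : -s ≤ 2 * k) :
    ((√(2 * y) + √(2 * z)) / 2) ^ s ≤ 2 ^ k * (y ^ (s / 2) + z ^ (s / 2)) := by
  have hterm : ∀ x : ℝ, 0 ≤ x → (√(2 * x) / 2) ^ s ≤ 2 ^ k * x ^ (s / 2) := fun x hx ↦
    calc (√(2 * x) / 2) ^ s = √(2⁻¹ * x) ^ s := by
          rw [show 2⁻¹ * x = 2 * x / 2 ^ 2 by ring, sqrt_div' _ (by positivity),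
            sqrt_sq zero_le_two]
      _ = 2 ^ (-(s / 2)) * x ^ (s / 2) := by
          rw [sqrt_eq_rpow, ← rpow_mul (by positivity), one_div_mul_eq_div,
            mul_rpow (by positivity) hx, inv_rpow zero_le_two, rpow_neg zero_le_two]
      _ ≤ 2 ^ k * x ^ (s / 2) := by
          gcongr
          · exact one_le_two
          · linarith
  calc ((√(2 * y) + √(2 * z)) / 2) ^ s
      ≤ (√(2 * y) / 2) ^ s + (√(2 * z) / 2) ^ s := by
        rw [add_div]
        exact rpow_add_le_add_rpow_of_le_one (by positivity) (by positivity) hs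
    _ ≤ 2 ^ k * (y ^ (s / 2) + z ^ (s / 2)) := by
        rw [mul_add]
        exact add_le_add (hterm y hy) (hterm z hz)

lemma half_sqrt_two_mul_add_add_rpow_le {y z α : ℝ} {k : ℕ} (hy : 0 ≤ y) (hz : 0 ≤ z)
    (hα : 0 ≤ α) (hk : α - 1 ≤ 2 * k) :
    (√(2 * y) + √(2 * z)) / 2 + ((√(2 * y) + √(2 * z)) / 2) ^ (1 - α) ≤
      2 ^ k * (y ^ ((1 : ℝ) / 2) + y ^ ((1 - α) / 2) + z ^ ((1 : ℝ) / 2) + z ^ ((1 - α) / 2)) := by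
  have hone := half_sqrt_two_mul_add_rpow_le (k := k) hy hz (le_refl 1)
    (by linarith [Nat.cast_nonneg (α := ℝ) k])
  have hadd := half_sqrt_two_mul_add_rpow_le (s := 1 - α) (k := k) hy hz (by linarith)
    (by linarith)
  rw [rpow_natCast] at hone hadd
  rw [rpow_one] at hone
  linear_combination hone + hadd

lemma sq_mul_rpow_neg_mul_div_add_le {m n α : ℝ} (hm : 0 < m) (hα0 : 0 ≤ α) (hα : α < n - 2) :
    m ^ 2 * (m ^ (-1 : ℝ) * ((n - 1) / (n - 1 - 1)) +
        m ^ (-(1 + α)) * ((n - 1) / (n - 1 - (1 + α)))) ≤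
      (n - 1) / (n - 2 - α) * (m + m ^ (1 - α)) := by
  have hgap : 0 < n - 2 - α := sub_pos.2 hα
  have hdim : (n - 1) / (n - 1 - 1) ≤ (n - 1) / (n - 2 - α) :=
    div_le_div_of_nonneg_left (by linarith) hgap (by linarith)
  have hone : m ^ 2 * m ^ (-1 : ℝ) = m := by
    rw [rpow_neg_one, sq, mul_inv_cancel_right₀ hm.ne']
  have hadd : m ^ 2 * m ^ (-(1 + α)) = m ^ (1 - α) := by
    rw [← rpow_two, ← rpow_add hm]
    ring_nf
  calc _ = m * ((n - 1) / (n - 1 - 1)) + m ^ (1 - α) * ((n - 1) / (n - 2 - α)) := by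
        rw [mul_add, ← mul_assoc, ← mul_assoc, hone, hadd, sub_add_eq_sub_sub, sub_sub n 1 1,
          one_add_one_eq_two]
    _ ≤ m * ((n - 1) / (n - 2 - α)) + m ^ (1 - α) * ((n - 1) / (n - 2 - α)) := by gcongr
    _ = _ := by ring

lemma ofReal_div_ofReal_pow_three_mul_min_le {N c r α : ℝ} (hr : 0 ≤ r) (hc : 0 ≤ c)
    (hN : N ≤ c * r ^ 2) :
    ENNReal.ofReal N / ENNReal.ofReal (r ^ 3 * min (r ^ α) 1) ≤
      ENNReal.ofReal (c * (r ^ (-1 : ℝ) + r ^ (-(1 + α)))) := by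
  rcases hr.eq_or_lt with rfl | hr
  -- For `r = 0` the bound on `N` makes the numerator vanish, and `0 / 0 = 0` in `ℝ≥0∞`.
  · rw [ENNReal.ofReal_of_nonpos (by simpa using hN), ENNReal.zero_div]
    exact zero_le
  have hmin : 0 < min (r ^ α) 1 := lt_min (rpow_pos_of_pos hr _) one_pos
  have hinv : (min (r ^ α) 1)⁻¹ ≤ 1 + r ^ (-α) := by
    rw [rpow_neg hr.le]
    have : 0 < (r ^ α)⁻¹ := inv_pos.2 (rpow_pos_of_pos hr _)
    rcases min_choice (r ^ α) 1 with h | h <;> rw [h]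
    · linarith
    · simpa using this.le
  rw [← ENNReal.ofReal_div_of_pos (mul_pos (pow_pos hr 3) hmin)]
  refine ENNReal.ofReal_le_ofReal ?_
  calc N / (r ^ 3 * min (r ^ α) 1) ≤ c * r ^ 2 / (r ^ 3 * min (r ^ α) 1) := by gcongr
    _ = c * (r⁻¹ * (min (r ^ α) 1)⁻¹) := by field_simp
    _ ≤ c * (r⁻¹ * (1 + r ^ (-α))) := by gcongr
    _ = c * (r ^ (-1 : ℝ) + r ^ (-(1 + α))) := by
        rw [neg_add, rpow_add hr, rpow_neg_one]; ring

end Scalar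

section SphereIntegrals

open Metric Module

variable {E : Type*} [NormedAddCommGroup E] [InnerProductSpace ℝ E] [FiniteDimensional ℝ E]
  [MeasurableSpace E] [BorelSpace E] (μ : Measure E) [μ.IsAddHaarMeasure]

lemma toSphere_norm_smul_sub_smul_div_lt_le (ω : sphere (0 : E) 1) {a b τ : ℝ} (hab : 0 < a + b)
    (hτ0 : 0 < τ) (hτ1 : τ ≤ 1) :
    μ.toSphere {ω' : sphere (0 : E) 1 | ‖a • (ω : E) - b • (ω' : E)‖ / ((a + b) / 2) < τ} ≤
      2 ^ finrank ℝ E * μ.toSphere Set.univ * ENNReal.ofReal (τ ^ (finrank ℝ E - 1 : ℝ)) := by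
  refine (measure_mono fun ω' hω' ↦ ?_).trans (toSphere_ball_le μ ω hτ0 hτ1)
  rw [mem_ball_comm, mem_ball, Subtype.dist_eq, dist_eq_norm]
  refine lt_of_le_of_lt ?_ (Set.mem_ofPred.1 hω')
  rw [le_div_iff₀' (half_pos hab)]
  exact half_add_mul_norm_sub_le_norm_smul_sub_smul (norm_eq_of_mem_sphere ω)
    (norm_eq_of_mem_sphere ω') a b

lemma lintegral_norm_smul_sub_smul_rpow_neg_le (ω : sphere (0 : E) 1) {a b p : ℝ}
    (hab : 0 < a + b) (hp : 0 < p) (hpn : p < finrank ℝ E - 1) :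
    ∫⁻ ω' : sphere (0 : E) 1, ENNReal.ofReal (‖a • (ω : E) - b • (ω' : E)‖ ^ (-p))
        ∂μ.toSphere ≤
      2 ^ finrank ℝ E * μ.toSphere Set.univ *
        ENNReal.ofReal (((a + b) / 2) ^ (-p) *
          ((finrank ℝ E - 1) / (finrank ℝ E - 1 - p))) := by
  set n : ℝ := (finrank ℝ E : ℝ)
  set K := 2 ^ finrank ℝ E * μ.toSphere Set.univ
  set m := (a + b) / 2
  have hm : 0 < m := half_pos hab
  have hgap : 0 < n - 1 - p := sub_pos.2 hpn
  have hscaled :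
      ∫⁻ ω' : sphere (0 : E) 1, ENNReal.ofReal ((‖a • (ω : E) - b • (ω' : E)‖ / m) ^ (-p))
        ∂μ.toSphere ≤ K * ENNReal.ofReal ((n - 1) / (n - 1 - p)) :=
    calc _ ≤ μ.toSphere Set.univ + K * ENNReal.ofReal (p / (n - 1 - p)) :=
          lintegral_rpow_neg_le_of_measure_lt_le (by fun_prop)
            (.of_forall fun _ ↦ by positivity) hp hpn
            fun τ ↦ toSphere_norm_smul_sub_smul_div_lt_le μ ω hab
      _ ≤ K * 1 + K * ENNReal.ofReal (p / (n - 1 - p)) := by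
          rw [mul_one]
          gcongr
          exact le_mul_of_one_le_left' (one_le_pow₀ one_le_two)
      _ = K * ENNReal.ofReal ((n - 1) / (n - 1 - p)) := by
          rw [← mul_add, ← ENNReal.ofReal_one, ← ENNReal.ofReal_add zero_le_one (by positivity),
            one_add_div hgap.ne', sub_add_cancel]
  calc _ = ∫⁻ ω' : sphere (0 : E) 1, ENNReal.ofReal (m ^ (-p)) *
          ENNReal.ofReal ((‖a • (ω : E) - b • (ω' : E)‖ / m) ^ (-p)) ∂μ.toSphere := by
        refine lintegral_congr fun ω' ↦ ?_
        rw [← ENNReal.ofReal_mul (by positivity), ← mul_rpow hm.le (by positivity),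
          mul_div_cancel₀ _ hm.ne']
    _ ≤ ENNReal.ofReal (m ^ (-p)) * (K * ENNReal.ofReal ((n - 1) / (n - 1 - p))) := by
        rw [lintegral_const_mul' _ _ ENNReal.ofReal_ne_top]
        gcongr
    _ = K * ENNReal.ofReal (m ^ (-p) * ((n - 1) / (n - 1 - p))) := by
        rw [ENNReal.ofReal_mul (by positivity), mul_left_comm]

lemma lintegral_rpow_neg_one_add_rpow_neg_le (ω : sphere (0 : E) 1) {a b α : ℝ}
    (hab : 0 < a + b) (hα0 : 0 ≤ α) (hα : α < finrank ℝ E - 2) :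
    ∫⁻ ω' : sphere (0 : E) 1, ENNReal.ofReal (((a + b) / 2) ^ 2 *
        (‖a • (ω : E) - b • (ω' : E)‖ ^ (-1 : ℝ) + ‖a • (ω : E) - b • (ω' : E)‖ ^ (-(1 + α))))
        ∂μ.toSphere ≤
      2 ^ finrank ℝ E * μ.toSphere Set.univ *
        ENNReal.ofReal ((finrank ℝ E - 1) / (finrank ℝ E - 2 - α) *
          ((a + b) / 2 + ((a + b) / 2) ^ (1 - α))) := by
  have hm : 0 < (a + b) / 2 := half_pos hab
  have hone := lintegral_norm_smul_sub_smul_rpow_neg_le μ ω hab one_pos (by linarith)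
  have hadd := lintegral_norm_smul_sub_smul_rpow_neg_le μ ω hab (p := 1 + α) (by linarith)
    (by linarith)
  set n : ℝ := (finrank ℝ E : ℝ)
  set K := 2 ^ finrank ℝ E * μ.toSphere Set.univ
  set m := (a + b) / 2
  have hn : 0 ≤ n - 1 := by linarith
  have hn1 : 0 ≤ n - 1 - 1 := by linarith
  have hnα : 0 ≤ n - 1 - (1 + α) := by linarith
  calc _ = ENNReal.ofReal (m ^ 2) *
        (∫⁻ ω' : sphere (0 : E) 1, ENNReal.ofReal (‖a • (ω : E) - b • (ω' : E)‖ ^ (-1 : ℝ))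
            ∂μ.toSphere +
          ∫⁻ ω' : sphere (0 : E) 1, ENNReal.ofReal (‖a • (ω : E) - b • (ω' : E)‖ ^ (-(1 + α)))
            ∂μ.toSphere) := by
        rw [← lintegral_add_left (by fun_prop), ← lintegral_const_mul' _ _ ENNReal.ofReal_ne_top]
        refine lintegral_congr fun ω' ↦ ?_
        rw [ENNReal.ofReal_mul (by positivity), ENNReal.ofReal_add (by positivity) (by positivity)]
    _ ≤ ENNReal.ofReal (m ^ 2) * (K * ENNReal.ofReal (m ^ (-1 : ℝ) * ((n - 1) / (n - 1 - 1))) +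
          K * ENNReal.ofReal (m ^ (-(1 + α)) * ((n - 1) / (n - 1 - (1 + α))))) := by
        gcongr
    _ = K * ENNReal.ofReal (m ^ 2 * (m ^ (-1 : ℝ) * ((n - 1) / (n - 1 - 1)) +
          m ^ (-(1 + α)) * ((n - 1) / (n - 1 - (1 + α))))) := by
        rw [ENNReal.ofReal_mul (p := m ^ 2) (by positivity),
          ENNReal.ofReal_add (by positivity) (by positivity)]
        ring
    _ ≤ _ := by
        gcongr K * ENNReal.ofReal ?_
        exact sq_mul_rpow_neg_mul_div_add_le hm hα0 hα

lemma lintegral_sub_sq_add_mul_one_sub_inner_sq_div_le (ω : sphere (0 : E) 1) {α y z : ℝ}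
    (hα0 : 0 ≤ α) (hα : α < finrank ℝ E - 2) (hy : 0 ≤ y) (hz : 0 ≤ z) :
    ∫⁻ ω' : sphere (0 : E) 1,
        ENNReal.ofReal ((y - z) ^ 2 + y * z * (1 - ⟪(ω : E), (ω' : E)⟫ ^ 2)) /
          ENNReal.ofReal (‖√(2 * y) • (ω : E) - √(2 * z) • (ω' : E)‖ ^ 3 *
            min (‖√(2 * y) • (ω : E) - √(2 * z) • (ω' : E)‖ ^ α) 1) ∂μ.toSphere ≤
      2 ^ finrank ℝ E * μ.toSphere Set.univ *
        ENNReal.ofReal ((finrank ℝ E - 1) / (finrank ℝ E - 2 - α) *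
          ((√(2 * y) + √(2 * z)) / 2 + ((√(2 * y) + √(2 * z)) / 2) ^ (1 - α))) := by
  have hsum : 0 ≤ √(2 * y) + √(2 * z) := by positivity
  rcases hsum.eq_or_lt with h | h
  · obtain ⟨hy0, hz0⟩ := (add_eq_zero_iff_of_nonneg (sqrt_nonneg _) (sqrt_nonneg _)).1 h.symm
    obtain rfl : y = 0 := by simpa using (sqrt_eq_zero (by positivity)).1 hy0
    obtain rfl : z = 0 := by simpa using (sqrt_eq_zero (by positivity)).1 hz0
    simp
  · refine (lintegral_mono fun ω' ↦ ?_).trans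
      (lintegral_rpow_neg_one_add_rpow_neg_le μ ω h hα0 hα)
    exact ofReal_div_ofReal_pow_three_mul_min_le (norm_nonneg _) (by positivity)
      (sub_sq_add_mul_one_sub_inner_sq_le (norm_eq_of_mem_sphere ω) (norm_eq_of_mem_sphere ω')
        hy hz)

-- For `1 < α` and `y = 0`, Lean's `y ^ ((1 - α) / 2)` is `0`, not `∞`, so the bound is not void.
theorem stmt8_general : ∃ C₀ : ℝ, 0 < C₀ ∧
    ∀ α : ℝ, 0 ≤ α → α < finrank ℝ E - 2 → ∀ y z : ℝ, 0 ≤ y → 0 ≤ z →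
      (∫⁻ ω : sphere (0 : E) 1, ∫⁻ ω' : sphere (0 : E) 1,
          ENNReal.ofReal ((y - z) ^ 2 + y * z * (1 - ⟪(ω : E), (ω' : E)⟫ ^ 2)) /
            ENNReal.ofReal (‖√(2 * y) • (ω : E) - √(2 * z) • (ω' : E)‖ ^ 3 *
              min (‖√(2 * y) • (ω : E) - √(2 * z) • (ω' : E)‖ ^ α) 1)
        ∂μ.toSphere ∂μ.toSphere) ≤
      ENNReal.ofReal (C₀ / (finrank ℝ E - 2 - α) *
        (y ^ ((1 : ℝ) / 2) + y ^ ((1 - α) / 2) + z ^ ((1 : ℝ) / 2) + z ^ ((1 - α) / 2))) := by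
  set S := μ.toSphere.real Set.univ
  refine ⟨4 ^ finrank ℝ E * (finrank ℝ E * S ^ 2 + 1), by positivity,
    fun α hα0 hα y z hy hz ↦ ?_⟩
  have : 0 < finrank ℝ E - 2 - α := sub_pos.2 hα
  have hn : (0 : ℝ) ≤ finrank ℝ E - 1 := by linarith
  have hm := half_sqrt_two_mul_add_add_rpow_le (k := finrank ℝ E) hy hz hα0 (by linarith)
  set m := (√(2 * y) + √(2 * z)) / 2
  set T := y ^ ((1 : ℝ) / 2) + y ^ ((1 - α) / 2) + z ^ ((1 : ℝ) / 2) + z ^ ((1 - α) / 2)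
  have hreal : 2 ^ finrank ℝ E * S *
      ((finrank ℝ E - 1) / (finrank ℝ E - 2 - α) * (m + m ^ (1 - α))) * S ≤
      4 ^ finrank ℝ E * (finrank ℝ E * S ^ 2 + 1) / (finrank ℝ E - 2 - α) * T :=
    calc _ ≤ 2 ^ finrank ℝ E * S *
          ((finrank ℝ E - 1) / (finrank ℝ E - 2 - α) * (2 ^ finrank ℝ E * T)) * S := by gcongr
      _ = 4 ^ finrank ℝ E * ((finrank ℝ E - 1) * S ^ 2) / (finrank ℝ E - 2 - α) * T := by
          rw [show (4 : ℝ) = 2 * 2 by norm_num, mul_pow]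
          ring
      _ ≤ _ := by
          gcongr
          nlinarith [sq_nonneg S]
  calc _ ≤ 2 ^ finrank ℝ E * μ.toSphere Set.univ * ENNReal.ofReal
          ((finrank ℝ E - 1) / (finrank ℝ E - 2 - α) * (m + m ^ (1 - α))) *
            μ.toSphere Set.univ := by
        rw [← lintegral_const]
        exact lintegral_mono fun ω ↦
          lintegral_sub_sq_add_mul_one_sub_inner_sq_div_le μ ω hα0 hα hy hz
    _ = ENNReal.ofReal (2 ^ finrank ℝ E * S *
          ((finrank ℝ E - 1) / (finrank ℝ E - 2 - α) * (m + m ^ (1 - α))) * S) := by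
        rw [ENNReal.ofReal_mul (q := S) (by positivity),
          ENNReal.ofReal_mul (p := 2 ^ finrank ℝ E * S) (by positivity),
          ENNReal.ofReal_mul (q := S) (by positivity), ENNReal.ofReal_pow zero_le_two,
          ENNReal.ofReal_ofNat, ofReal_measureReal]
    _ ≤ _ := ENNReal.ofReal_le_ofReal hreal

end SphereIntegrals

/-- There is an absolute constant `C₀ > 0` such that for all `0 ≤ α < 1`
and `y, z ≥ 0`,
`∫_{S²×S²} [(y−z)² + yz(1−(ω·ω_*)²)] / (|√(2y)ω − √(2z)ω_*|³ min(|√(2y)ω − √(2z)ω_*|^α, 1))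
   dω dω_* ≤ (C₀/(1−α)) (y^{1/2} + y^{(1−α)/2} + z^{1/2} + z^{(1−α)/2})`. -/
theorem stmt8 : ∃ C₀ : ℝ, 0 < C₀ ∧
    ∀ α : ℝ, 0 ≤ α → α < 1 → ∀ y z : ℝ, 0 ≤ y → 0 ≤ z →
      (∫⁻ ω : Metric.sphere (0 : E3) 1, ∫⁻ ω' : Metric.sphere (0 : E3) 1,
          ENNReal.ofReal ((y - z) ^ 2 + y * z * (1 - (⟪(ω : E3), (ω' : E3)⟫) ^ 2)) /
            ENNReal.ofReal
              (‖Real.sqrt (2 * y) • (ω : E3) - Real.sqrt (2 * z) • (ω' : E3)‖ ^ (3 : ℕ) *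
                min (‖Real.sqrt (2 * y) • (ω : E3) - Real.sqrt (2 * z) • (ω' : E3)‖ ^ α) 1)
        ∂sphM ∂sphM) ≤
      ENNReal.ofReal ((C₀ / (1 - α)) *
        (y ^ ((1 : ℝ) / 2) + y ^ ((1 - α) / 2) + z ^ ((1 : ℝ) / 2) + z ^ ((1 - α) / 2))) := by
  have hdim : (Module.finrank ℝ E3 : ℝ) - 2 = 1 := by norm_num [finrank_euclideanSpace_fin]
  simpa only [hdim, sphM] using stmt8_general (volume : Measure E3)

end
end
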